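/- arXiv:2304.10795 — 2 statements merged into one kernel-verified Lean document; each statement's English description precedes it below -/
import Mathlib

section
/- If Ŝ is a Neumann subgroup of M̂ = PGL(2,ℤ), then every element of order 2 of Ŝ belongs to M = PSL(2,ℤ); consequently, Ŝ is never an internal semidirect product of S = Ŝ ∩ M and a subgroup of order 2. -/
open Matrix Pointwise

noncomputable section

abbrev GL2Z := Matrix.GeneralLinearGroup (Fin 2) ℤ

/-- The subgroup {±I} of GL(2,ℤ), which is its center. -/
def pmI : Subgroup GL2Z := Subgroup.zpowers (-1)

instance pmI_normal : pmI.Normal := by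
  constructor
  rintro n hn g
  obtain ⟨k, hk⟩ := Subgroup.mem_zpowers_iff.mp hn
  have hc : Commute ((-1 : GL2Z) ^ k) g := (Commute.neg_one_left g).zpow_left k
  have : g * n * g⁻¹ = n := by
    rw [← hk, ← hc.eq]; group
  rw [this]; exact hn

/-- The extended modular group PGL(2,ℤ) = GL(2,ℤ)/{±I}. -/
abbrev Mhat := GL2Z ⧸ pmI

def pr : GL2Z →* Mhat := QuotientGroup.mk' pmI

def tauGL : GL2Z := ⟨!![1,1;0,1], !![1,-1;0,1], by decide, by decide⟩
def nuGL : GL2Z := ⟨!![-1,0;0,1], !![-1,0;0,1], by decide, by decide⟩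
def omegaGL : GL2Z := ⟨!![0,-1;1,0], !![0,1;-1,0], by decide, by decide⟩
def phiGL : GL2Z := ⟨!![0,-1;1,1], !![1,1;-1,0], by decide, by decide⟩

/-- τ, the class of [[1,1],[0,1]]. -/
def tau : Mhat := pr tauGL
/-- ν, the class of [[-1,0],[0,1]]. -/
def nu : Mhat := pr nuGL
/-- ω, the class of [[0,-1],[1,0]]. -/
def omega : Mhat := pr omegaGL
/-- φ, the class of [[0,-1],[1,1]]. -/
def phi : Mhat := pr phiGL

/-- T̂ = ⟨τ, ν⟩, the stabilizer of ∞. -/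
def That : Subgroup Mhat := Subgroup.closure {tau, nu}

/-- A Neumann subgroup of the extended modular group: a complement of T̂. -/
def IsNeumann (S : Subgroup Mhat) : Prop :=
  (S : Set Mhat) * (That : Set Mhat) = Set.univ ∧ S ⊓ That = ⊥

/-- The modular group PSL(2,ℤ), as the subgroup of PGL(2,ℤ) of classes of
matrices of determinant one. -/
def Msub : Subgroup Mhat :=
  Subgroup.map pr (MonoidHom.ker (Matrix.GeneralLinearGroup.det))

def uHom : Multiplicative ℤ →* GL2Z where
  toFun n := ⟨!![1, n.toAdd; 0, 1], !![1, -n.toAdd; 0, 1],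
    by ext i j; fin_cases i <;> fin_cases j <;> simp [Matrix.mul_apply, Fin.sum_univ_two],
    by ext i j; fin_cases i <;> fin_cases j <;> simp [Matrix.mul_apply, Fin.sum_univ_two]⟩
  map_one' := by
    ext i j; fin_cases i <;> fin_cases j <;> simp
  map_mul' x y := by
    ext i j; fin_cases i <;> fin_cases j <;>
      simp [Matrix.mul_apply, Fin.sum_univ_two, add_comm]

lemma tau_zpow (n : ℤ) : tauGL ^ n = uHom (Multiplicative.ofAdd n) := by
  have h : tauGL = uHom (Multiplicative.ofAdd 1) := by
    ext i j; fin_cases i <;> fin_cases j <;> simp [tauGL, uHom]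
  rw [h, ← map_zpow, ← ofAdd_zsmul]; simp

lemma tn_val (n : ℤ) : ((tauGL ^ n * nuGL : GL2Z) : Matrix (Fin 2) (Fin 2) ℤ) = !![-1, n; 0, 1] := by
  rw [tau_zpow]
  ext i j; fin_cases i <;> fin_cases j <;>
    simp [uHom, nuGL, Matrix.mul_apply, Fin.sum_univ_two]

lemma tn_mem (n : ℤ) : pr (tauGL ^ n * nuGL) ∈ That := by
  rw [map_mul, map_zpow]
  exact That.mul_mem (That.zpow_mem (Subgroup.subset_closure (by simp [tau])) n)
    (Subgroup.subset_closure (by simp [nu]))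

lemma pr_eq_one_iff (A : GL2Z) : pr A = 1 ↔ A ∈ pmI := QuotientGroup.eq_one_iff A

lemma pr_neg (A : GL2Z) : pr (-A) = pr A := by
  have h : pr (-1) = 1 := (pr_eq_one_iff _).2 (Subgroup.mem_zpowers _)
  rw [← neg_one_mul, map_mul, h, one_mul]

lemma mem_pmI {A : GL2Z} (h : A ∈ pmI) : A = 1 ∨ A = -1 := by
  obtain ⟨k, rfl⟩ := Subgroup.mem_zpowers_iff.mp h
  rcases Int.even_or_odd k with h | h
  · left; exact h.neg_one_zpow
  · right
    obtain ⟨m, rfl⟩ := h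
    rw [_root_.zpow_add, _root_.zpow_mul]; simp

/-- an integral involution of determinant -1 is conjugate into the stabilizer of infinity -/
lemma conj_mem (A : GL2Z) (ht : A 1 1 = - A 0 0) (hd : A 0 0 * A 0 0 + A 0 1 * A 1 0 = 1) :
    ∃ B : GL2Z, ∃ t ∈ That, pr A * pr B = pr B * t := by
  obtain ⟨a, ha⟩ : ∃ a, a = A 0 0 := ⟨_, rfl⟩
  obtain ⟨b, hb⟩ : ∃ b, b = A 0 1 := ⟨_, rfl⟩
  obtain ⟨c, hc⟩ : ∃ c, c = A 1 0 := ⟨_, rfl⟩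
  have hA : (A : Matrix (Fin 2) (Fin 2) ℤ) = !![a, b; c, -a] := by
    ext i j; fin_cases i <;> fin_cases j <;> simp [ha, hb, hc, ht]
  rw [← ha, ← hb, ← hc] at hd
  by_cases h0 : a + 1 = 0 ∧ c = 0
  · refine ⟨1, pr A, ?_, by simp⟩
    have : A = tauGL ^ b * nuGL := by
      apply Units.ext
      rw [tn_val, hA, h0.2, show a = -1 by lia]; simp
    rw [this]; exact tn_mem b
  · obtain ⟨d, p, r, x, y, hd0, hp, hr, hxy⟩ : ∃ d p r x y : ℤ, d ≠ 0 ∧ a + 1 = d * p ∧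
        c = d * r ∧ p * x + r * y = 1 := by
      have hg : (0:ℕ) < Int.gcd (a+1) c := by
        rw [Int.gcd_pos_iff]; tauto
      obtain ⟨p, hp⟩ := Int.gcd_dvd_left (a := a+1) (b := c)
      obtain ⟨r, hr⟩ := Int.gcd_dvd_right (a := a+1) (b := c)
      have hz : ((Int.gcd (a+1) c : ℕ) : ℤ) ≠ 0 := by exact_mod_cast hg.ne'
      refine ⟨Int.gcd (a+1) c, p, r, Int.gcdA (a+1) c, Int.gcdB (a+1) c, hz, hp, hr, ?_⟩
      have hb := Int.gcd_eq_gcd_ab (a+1) c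
      apply mul_left_cancel₀ hz
      linear_combination -hb - Int.gcdA (a+1) c * hp - Int.gcdB (a+1) c * hr
    have e1 : a * p + b * r = p := by
      apply mul_left_cancel₀ hd0
      linear_combination hd - (a - 1) * hp - b * hr
    have e2 : c * p - a * r = r := by
      apply mul_left_cancel₀ hd0
      linear_combination -c * hp + (a + 1) * hr
    let B : GL2Z := ⟨!![p, -y; r, x], !![x, y; -r, p],
      by ext i j; fin_cases i <;> fin_cases j <;>
          simp [Matrix.mul_apply, Fin.sum_univ_two] <;> linarith,
      by ext i j; fin_cases i <;> fin_cases j <;>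
          simp [Matrix.mul_apply, Fin.sum_univ_two] <;> linarith⟩
    have hB : (B : Matrix (Fin 2) (Fin 2) ℤ) = !![p, -y; r, x] := rfl
    let n : ℤ := -(b * x ^ 2 - 2 * a * x * y - c * y ^ 2)
    refine ⟨B, pr (tauGL ^ n * nuGL), tn_mem n, ?_⟩
    rw [← pr_neg (tauGL ^ n * nuGL), ← map_mul, ← map_mul]
    congr 1
    apply Units.ext
    rw [Units.val_mul, Units.val_mul, Units.val_neg, tn_val, hA, hB]
    ext i j; fin_cases i <;> fin_cases j <;>
      simp [Matrix.mul_apply, Fin.sum_univ_two, n]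
    · linarith
    · grind
    · linarith
    · grind

lemma order_two_mem (Shat : Subgroup Mhat) (hN : IsNeumann Shat) (g : Mhat) (hg : g ∈ Shat)
    (ho : orderOf g = 2) : g ∈ Msub := by
  obtain ⟨A, rfl⟩ : ∃ A, pr A = g := QuotientGroup.mk'_surjective pmI g
  by_contra hM
  have hne : pr A ≠ 1 := by
    intro h; rw [h, orderOf_one] at ho; omega
  have hsq : A * A = 1 ∨ A * A = -1 := by
    apply mem_pmI
    rw [← pr_eq_one_iff, map_mul, ← pow_two]
    have h := pow_orderOf_eq_one (pr A)
    rwa [ho] at h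
  have hdet : Matrix.GeneralLinearGroup.det A = -1 := by
    rcases Int.units_eq_one_or (Matrix.GeneralLinearGroup.det A) with h | h
    · exact absurd ⟨A, h, rfl⟩ hM
    · exact h
  have hdet' : A 0 0 * A 1 1 - A 0 1 * A 1 0 = -1 := by
    have := congrArg Units.val hdet
    simpa [Matrix.det_fin_two] using this
  have key : A 1 1 = - A 0 0 := by
    have hij : ∀ i j, (A * A : GL2Z) i j = A i 0 * A 0 j + A i 1 * A 1 j := by
      intro i j; simp [Matrix.mul_apply, Fin.sum_univ_two]
    have h00 := hij 0 0
    have h01 := hij 0 1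
    have h10 := hij 1 0
    have h11 := hij 1 1
    generalize A 0 0 = a at *
    generalize A 0 1 = b at *
    generalize A 1 0 = c at *
    generalize A 1 1 = d at *
    by_contra hk
    have hk' : a + d ≠ 0 := by intro h; apply hk; linarith
    have hb : b = 0 := by
      apply mul_left_cancel₀ hk'
      rcases hsq with h | h <;> rw [h] at h01 <;> simp at h01 <;> linarith
    have hc : c = 0 := by
      apply mul_left_cancel₀ hk'
      rcases hsq with h | h <;> rw [h] at h10 <;> simp at h10 <;> linarith
    subst hb hc
    have : a * d = -1 := by linarith
    rcases Int.isUnit_iff.1 (IsUnit.of_mul_eq_one (-d) (by linarith : a * (-d) = 1)) with h | h <;>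
      subst h <;> apply hk <;> linarith
  obtain ⟨B, t, ht, hBt⟩ := conj_mem A key (by rw [key] at hdet'; linarith)
  have hu : pr B ∈ (Shat : Set Mhat) * (That : Set Mhat) := by rw [hN.1]; trivial
  obtain ⟨s, hs, u, hu, hsu⟩ := Set.mem_mul.1 hu
  rw [← hsu] at hBt
  have h1 : s⁻¹ * pr A * s = u * t * u⁻¹ := by
    rw [eq_mul_inv_iff_mul_eq, mul_assoc, mul_assoc, hBt]; group
  have h2 : s⁻¹ * pr A * s ∈ Shat ⊓ That := by
    refine ⟨Shat.mul_mem (Shat.mul_mem (Shat.inv_mem hs) hg) hs, ?_⟩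
    rw [h1]
    exact That.mul_mem (That.mul_mem hu ht) (That.inv_mem hu)
  rw [hN.2, Subgroup.mem_bot] at h2
  apply hne
  have : pr A = s * (s⁻¹ * pr A * s) * s⁻¹ := by group
  rw [this, h2]; group

/-- If Ŝ is a Neumann subgroup of M̂ = PGL(2,ℤ), then every
element of order 2 of Ŝ lies in M = PSL(2,ℤ); consequently Ŝ is never an
internal semidirect product of S = Ŝ ∩ M and a subgroup of order 2. -/
theorem neumann_no_semidirect_complement_of_order_two
    (Shat : Subgroup Mhat) (hN : IsNeumann Shat) :
    (∀ g ∈ Shat, orderOf g = 2 → g ∈ Msub) ∧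
    ¬ ∃ K : Subgroup Mhat, K ≤ Shat ∧ Nat.card K = 2 ∧
        K ⊓ (Shat ⊓ Msub) = ⊥ ∧ K ⊔ (Shat ⊓ Msub) = Shat := by
  refine ⟨order_two_mem Shat hN, ?_⟩
  rintro ⟨K, hK, hcard, hbot, -⟩
  have hle : K ≤ Shat ⊓ Msub := by
    intro g hg
    refine ⟨hK hg, ?_⟩
    by_cases h1 : g = 1
    · rw [h1]; exact Msub.one_mem
    · apply order_two_mem Shat hN g (hK hg)
      have hp : g ^ 2 = 1 := by
        have h := pow_card_eq_one' (x := (⟨g, hg⟩ : K))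
        rw [hcard] at h
        exact congrArg Subtype.val h
      exact orderOf_eq_prime hp h1
  rw [inf_eq_left.2 hle] at hbot
  rw [hbot] at hcard
  simp at hcard
end
end

section
/- If Ŝ is a Neumann subgroup of M̂ = PGL(2,ℤ) not contained in M = PSL(2,ℤ), then Ŝ is isomorphic to a free product of infinitely many groups, each of which is cyclic of order 2, cyclic of order 3, or infinite cyclic. -/
open Matrix Pointwise

noncomputable section

structure NSetup (G Q : Type) [Group G] [MulAction G Q] (q0 : Q) (s f w : G) : Prop where
  hs : s * s = 1
  hw : w * w = 1
  hf : f * f * f = 1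
  hsf : s * f = f * f * s
  hsw : s * w = w * s
  w1 : w ≠ 1
  gen : Subgroup.closure {s, f, w} = ⊤
  trans : ∀ q : Q, ∃ g : G, g • q0 = q
  fs : ∀ q : Q, s • q ≠ q
  fws : ∀ q : Q, w • q ≠ s • q

namespace NSetup
variable {G Q : Type} [Group G] [MulAction G Q] {q0 : Q} {s f w : G}

/-- the dihedral group of order 6 -/
def D (s f : G) : Subgroup G := Subgroup.closure {s, f}

lemma s_mem : s ∈ D s f := Subgroup.subset_closure (by simp)
lemma f_mem : f ∈ D s f := Subgroup.subset_closure (by simp)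

lemma f_inv (h : NSetup G Q q0 s f w) : f⁻¹ = f ^ 2 := by
  rw [inv_eq_iff_mul_eq_one, pow_two, ← mul_assoc, h.hf]
lemma s_inv (h : NSetup G Q q0 s f w) : s⁻¹ = s := by
  rw [inv_eq_iff_mul_eq_one, h.hs]
lemma w_inv (h : NSetup G Q q0 s f w) : w⁻¹ = w := by
  rw [inv_eq_iff_mul_eq_one, h.hw]
lemma ww (h : NSetup G Q q0 s f w) (q : Q) : w • w • q = q := by
  rw [smul_smul, h.hw, one_smul]
lemma ss (h : NSetup G Q q0 s f w) (q : Q) : s • s • q = q := by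
  rw [smul_smul, h.hs, one_smul]
lemma fff (h : NSetup G Q q0 s f w) (q : Q) : f • f • f • q = q := by
  rw [smul_smul, smul_smul, h.hf, one_smul]
lemma sw (h : NSetup G Q q0 s f w) (q : Q) : s • w • q = w • s • q := by
  rw [smul_smul, h.hsw, smul_smul]
lemma sf (h : NSetup G Q q0 s f w) (q : Q) : s • f • q = f • f • s • q := by
  rw [smul_smul, h.hsf, smul_smul, smul_smul, mul_assoc]

lemma s_fpow (h : NSetup G Q q0 s f w) (i : ℕ) : s * f ^ i = f ^ (2 * i) * s := by
  induction i with
  | zero => simp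
  | succ i ih => rw [pow_succ, ← mul_assoc, ih, mul_assoc, h.hsf, Nat.mul_succ, pow_add, pow_two]; group

lemma fpow_inv (h : NSetup G Q q0 s f w) (i : ℕ) : (f ^ i)⁻¹ = f ^ (2 * i) := by
  rw [← inv_pow, h.f_inv, ← pow_mul]

lemma mem_D (h : NSetup G Q q0 s f w) {g : G} (hg : g ∈ D s f) :
    ∃ i : ℕ, g = f ^ i ∨ g = f ^ i * s := by
  induction hg using Subgroup.closure_induction with
  | mem x hx =>
    rcases hx with rfl | rfl
    · exact ⟨0, by simp⟩
    · exact ⟨1, by simp⟩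
  | one => exact ⟨0, by simp⟩
  | mul x y _ _ hx hy =>
    obtain ⟨i, rfl | rfl⟩ := hx <;> obtain ⟨j, rfl | rfl⟩ := hy
    · exact ⟨i + j, Or.inl (pow_add _ _ _).symm⟩
    · exact ⟨i + j, Or.inr (by rw [pow_add, mul_assoc])⟩
    · exact ⟨i + 2 * j, Or.inr (by rw [mul_assoc, h.s_fpow, pow_add, mul_assoc])⟩
    · refine ⟨i + 2 * j, Or.inl ?_⟩
      rw [mul_assoc, ← mul_assoc s, h.s_fpow, mul_assoc _ s, h.hs, mul_one, pow_add]
  | inv x _ hx =>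
    obtain ⟨i, rfl | rfl⟩ := hx
    · exact ⟨2 * i, Or.inl (h.fpow_inv i)⟩
    · refine ⟨2 * (2 * i), Or.inr ?_⟩
      rw [_root_.mul_inv_rev, h.s_inv, h.fpow_inv, h.s_fpow]

lemma fpow_fix (h : NSetup G Q q0 s f w) (i : ℕ) (q : Q) (hi : f ^ i • q = q) :
    f ^ i = 1 ∨ f • q = q := by
  have h3 : f ^ 3 = 1 := by rw [pow_succ, pow_two, h.hf]
  have e : f ^ i = f ^ (i % 3) := by
    conv_lhs => rw [← Nat.div_add_mod i 3, pow_add, pow_mul, h3, one_pow, one_mul]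
  have : i % 3 < 3 := Nat.mod_lt _ (by norm_num)
  rw [e] at hi ⊢
  interval_cases i % 3
  · left; simp
  · right; simpa using hi
  · right
    rw [pow_two, ← smul_smul] at hi
    have := h.fff q
    rw [hi] at this
    exact this

lemma refl_free (h : NSetup G Q q0 s f w) (i : ℕ) (q : Q) : (f ^ i * s) • q ≠ q := by
  intro hq
  have h3 : f ^ 3 = 1 := by rw [pow_succ, pow_two, h.hf]
  apply h.fs (f ^ i • q)
  rw [smul_smul, h.s_fpow, two_mul, pow_add, mul_assoc, ← smul_smul, hq]

lemma D_fix (h : NSetup G Q q0 s f w) {g : G} (hg : g ∈ D s f) (q : Q) (hq : g • q = q) :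
    g = 1 ∨ f • q = q := by
  obtain ⟨i, rfl | rfl⟩ := h.mem_D hg
  · exact h.fpow_fix i q hq
  · exact absurd hq (h.refl_free i q)

lemma fpow_of_fixed {q : Q} (hq : f • q = q) (i : ℕ) : f ^ i • q = q := by
  induction i with
  | zero => simp
  | succ i ih => rw [pow_succ, ← smul_smul, hq, ih]

lemma fixed_s (h : NSetup G Q q0 s f w) {q : Q} (hq : f • q = q) : f • s • q = s • q := by
  have h2 := h.sf q
  rw [hq] at h2
  conv_lhs => rw [h2, h.fff]

lemma fixed_D (h : NSetup G Q q0 s f w) {q : Q} (hq : f • q = q) {g : G} (hg : g ∈ D s f) :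
    f • g • q = g • q ∧ (g • q = q ∨ g • q = s • q) := by
  obtain ⟨i, rfl | rfl⟩ := h.mem_D hg
  · rw [fpow_of_fixed hq]; exact ⟨hq, Or.inl rfl⟩
  · rw [← smul_smul, fpow_of_fixed (h.fixed_s hq)]; exact ⟨h.fixed_s hq, Or.inr rfl⟩

lemma fixed_D' (h : NSetup G Q q0 s f w) {q : Q} {g : G} (hg : g ∈ D s f) 
    (hq : f • g • q = g • q) : f • q = q := by
  have := (h.fixed_D hq (inv_mem hg)).1
  simpa using this

/-- reach -/
def reach (s f w : G) (q0 : Q) : ℕ → Q → Prop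
  | 0, q => ∃ g ∈ D s f, q = g • q0
  | n + 1, q => ∃ g ∈ D s f, reach s f w q0 n (w • g • q)

lemma reach_D (n : ℕ) (q : Q) {g : G} (hg : g ∈ D s f) (hr : reach s f w q0 n q) :
    reach s f w q0 n (g • q) := by
  cases n with
  | zero =>
    obtain ⟨g', h', rfl⟩ := hr
    exact ⟨g * g', mul_mem hg h', by rw [smul_smul]⟩
  | succ n =>
    obtain ⟨g', h', hr⟩ := hr
    refine ⟨g' * g⁻¹, mul_mem h' (inv_mem hg), ?_⟩
    rw [← smul_smul, inv_smul_smul]; exact hr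

lemma reach_all (h : NSetup G Q q0 s f w) (q : Q) : ∃ n, reach s f w q0 n q := by
  have key : ∀ g : G, ∀ q : Q, (∃ n, reach s f w q0 n q) ↔ ∃ n, reach s f w q0 n (g • q) := by
    intro g
    have hg : g ∈ Subgroup.closure {s, f, w} := by rw [h.gen]; trivial
    induction hg using Subgroup.closure_induction with
    | mem x hx =>
      have hD : ∀ x ∈ D s f, ∀ q : Q, 
          (∃ n, reach s f w q0 n q) ↔ ∃ n, reach s f w q0 n (x • q) := by
        intro x hx q
        constructor
        · rintro ⟨n, hn⟩; exact ⟨n, reach_D n q hx hn⟩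
        · rintro ⟨n, hn⟩
          have := reach_D n _ (inv_mem hx) hn
          rw [inv_smul_smul] at this
          exact ⟨n, this⟩
      rcases hx with rfl | rfl | rfl
      · exact hD _ s_mem
      · exact hD _ f_mem
      · have : ∀ q, (∃ n, reach s f x q0 n q) → ∃ n, reach s f x q0 n (x • q) := by
          rintro q ⟨n, hn⟩
          exact ⟨n + 1, 1, one_mem _, by rw [one_smul, h.ww]; exact hn⟩
        intro q
        refine ⟨this q, fun hq => ?_⟩
        have := this _ hq
        rwa [h.ww] at this
    | one => simp
    | mul x y _ _ hx hy => intro q; rw [hy, hx, smul_smul]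
    | inv x _ hx => intro q; rw [hx (x⁻¹ • q), smul_inv_smul]
  obtain ⟨g, rfl⟩ := h.trans q
  exact (key g q0).1 ⟨0, 1, one_mem _, by simp⟩

open Classical in
/-- distance -/
noncomputable def dist (h : NSetup G Q q0 s f w) (q : Q) : ℕ := Nat.find (h.reach_all q)

lemma dist_reach (h : NSetup G Q q0 s f w) (q : Q) : reach s f w q0 (h.dist q) q := by
  classical exact Nat.find_spec (h.reach_all q)

lemma dist_le (h : NSetup G Q q0 s f w) {q : Q} {n : ℕ} (hn : reach s f w q0 n q) :
    h.dist q ≤ n := by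
  classical exact Nat.find_min' (h.reach_all q) hn

lemma dist_D (h : NSetup G Q q0 s f w) (q : Q) {g : G} (hg : g ∈ D s f) :
    h.dist (g • q) = h.dist q := by
  apply le_antisymm
  · exact h.dist_le (reach_D _ _ hg (h.dist_reach q))
  · apply h.dist_le
    have := reach_D _ _ (inv_mem hg) (h.dist_reach (g • q))
    rwa [inv_smul_smul] at this

lemma dist_zero (h : NSetup G Q q0 s f w) (q : Q) : h.dist q = 0 ↔ ∃ g ∈ D s f, q = g • q0 := by
  constructor
  · intro h0; have := h.dist_reach q; rw [h0] at this; exact this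
  · intro h0; exact Nat.le_zero.1 (h.dist_le (n := 0) h0)

lemma dist_succ (h : NSetup G Q q0 s f w) (q : Q) (hq : h.dist q ≠ 0) :
    ∃ g ∈ D s f, h.dist (w • g • q) + 1 = h.dist q := by
  obtain ⟨n, hn⟩ := Nat.exists_eq_succ_of_ne_zero hq
  have := h.dist_reach q
  rw [hn] at this
  obtain ⟨g, hg, hr⟩ := this
  refine ⟨g, hg, ?_⟩
  have h1 := h.dist_le hr
  have h2 : reach s f w q0 (h.dist (w • g • q) + 1) q := ⟨g, hg, h.dist_reach _⟩
  have := h.dist_le h2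
  omega

/-- base points, one for each orbit of `D` -/
lemma exists_bp (h : NSetup G Q q0 s f w) : ∃ bp : Q → Q,
    (∀ q, ∀ g ∈ D s f, bp (g • q) = bp q) ∧ (∀ q, ∃ g ∈ D s f, q = g • bp q) ∧
    (∀ q, h.dist q = 0 → bp q = q0) ∧ 
    (∀ q, h.dist q ≠ 0 → h.dist (w • bp q) + 1 = h.dist q) := by
  have key : ∀ v : MulAction.orbitRel.Quotient (D s f) Q, ∃ b : Q, 
      (Quotient.mk _ b = v) ∧ (h.dist b = 0 → b = q0) ∧ 
      (h.dist b ≠ 0 → h.dist (w • b) + 1 = h.dist b) := by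
    intro v
    induction v using Quotient.inductionOn with | _ q
    by_cases hq : h.dist q = 0
    · refine ⟨q0, ?_, fun _ => rfl, fun hh => absurd ((h.dist_zero q0).2 ⟨1, one_mem _, by simp⟩) hh⟩
      obtain ⟨g, hg, rfl⟩ := (h.dist_zero q).1 hq
      exact (Quotient.sound (s := MulAction.orbitRel (D s f) Q) (MulAction.mem_orbit q0 (⟨g, hg⟩ : D s f))).symm
    · obtain ⟨g, hg, hd⟩ := h.dist_succ q hq
      refine ⟨g • q, 
        (Quotient.sound (s := MulAction.orbitRel (D s f) Q) (MulAction.mem_orbit q (⟨g, hg⟩ : D s f))), ?_, ?_⟩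
      · rw [h.dist_D q hg]; exact fun hh => absurd hh hq
      · rw [h.dist_D q hg]; exact fun _ => hd
  choose B hB1 hB2 hB3 using key
  have hb : ∀ q, ∃ g ∈ D s f, q = g • B (Quotient.mk _ q) := by
    intro q
    have := Quotient.exact (s := MulAction.orbitRel (D s f) Q) (hB1 (Quotient.mk _ q)).symm
    obtain ⟨⟨g, hg⟩, hh⟩ := this
    exact ⟨g, hg, hh.symm⟩
  have hd : ∀ q, h.dist (B (Quotient.mk _ q)) = h.dist q := by
    intro q
    obtain ⟨g, hg, hq⟩ := hb q
    conv_rhs => rw [hq, h.dist_D _ hg]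
  refine ⟨fun q => B (Quotient.mk _ q), ?_, hb, ?_, ?_⟩
  · intro q g hg
    apply congrArg B
    exact (Quotient.sound (s := MulAction.orbitRel (D s f) Q) (MulAction.mem_orbit q (⟨g, hg⟩ : D s f)))
  · intro q hq; exact hB2 _ (by rw [hd, hq])
  · intro q hq; rw [← hd q] at hq ⊢; exact hB3 _ hq

/-- transversal inside `D` -/
lemma exists_dl (h : NSetup G Q q0 s f w) {bp : Q → Q} 
    (hbD : ∀ q, ∀ g ∈ D s f, bp (g • q) = bp q) (hb : ∀ q, ∃ g ∈ D s f, q = g • bp q) :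
    ∃ dl : Q → G, (∀ q, dl q ∈ D s f) ∧ (∀ q, dl q • bp q = q) ∧ 
      (∀ q, f • q = q → dl q = 1 ∨ dl q = s) ∧ (∀ q, dl (bp q) = 1) ∧
      (∀ q, dl (s • q) = s * dl q) ∧ (∀ q, f • q ≠ q → dl (f • q) = f * dl q) := by
  have key : ∀ q, ∃ d : G, d ∈ D s f ∧ d • bp q = q ∧ (f • q = q → d = 1 ∨ d = s) := by
    intro q
    obtain ⟨g, hg, hq⟩ := hb q
    by_cases hf : f • q = q
    · have hf' : f • bp q = bp q := by
        have := (h.fixed_D hf (inv_mem hg)).1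
        have e : g⁻¹ • q = bp q := by rw [inv_smul_eq_iff]; exact hq
        rwa [e] at this
      rcases (h.fixed_D hf' hg).2 with h1 | h1
      · exact ⟨1, one_mem _, by rw [one_smul, ← h1, ← hq], fun _ => Or.inl rfl⟩
      · exact ⟨s, s_mem, by rw [← h1, ← hq], fun _ => Or.inr rfl⟩
    · exact ⟨g, hg, hq.symm, fun h => absurd h hf⟩
  have uniq : ∀ q, ∀ d d' : G, (d ∈ D s f ∧ d • bp q = q ∧ (f • q = q → d = 1 ∨ d = s)) →
      (d' ∈ D s f ∧ d' • bp q = q ∧ (f • q = q → d' = 1 ∨ d' = s)) → d = d' := by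
    rintro q d d' ⟨h1, h2, h3⟩ ⟨h1', h2', h3'⟩
    by_cases hf : f • q = q
    · have := h.fs (bp q)
      rcases h3 hf with rfl | rfl <;> rcases h3' hf with rfl | rfl
      · rfl
      · rw [one_smul] at h2; exact absurd (h2'.trans h2.symm) (h.fs (bp q)) 
      · rw [one_smul] at h2'; exact absurd (h2.trans h2'.symm) (h.fs (bp q)) 
      · rfl
    · have : (d * d'⁻¹) • q = q := by
        have e : d'⁻¹ • q = bp q := by rw [inv_smul_eq_iff]; exact h2'.symm
        rw [← smul_smul, e, h2]
      rcases h.D_fix (mul_mem h1 (inv_mem h1')) q this with h4 | h4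
      · exact mul_inv_eq_one.1 h4
      · exact absurd h4 hf
  choose dl h1 h2 h3 using key
  have ub : ∀ q, bp (bp q) = bp q := by
    intro q
    obtain ⟨g, hg, hq⟩ := hb q
    have := hbD (bp q) g hg
    rw [← hq] at this; exact this.symm
  refine ⟨dl, h1, h2, h3, ?_, ?_, ?_⟩
  · intro q
    apply uniq (bp q) _ _ ⟨h1 _, h2 _, h3 _⟩
    exact ⟨one_mem _, by rw [ub, one_smul], fun _ => Or.inl rfl⟩
  · intro q
    apply uniq (s • q) _ _ ⟨h1 _, h2 _, h3 _⟩
    refine ⟨mul_mem s_mem (h1 _), by rw [hbD _ _ s_mem, ← smul_smul, h2], fun hf => ?_⟩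
    have := h.fixed_D' s_mem hf
    rcases h3 q this with h4 | h4
    · right; rw [h4, mul_one]
    · left; rw [h4, h.hs]
  · intro q hq
    apply uniq (f • q) _ _ ⟨h1 _, h2 _, h3 _⟩
    refine ⟨mul_mem f_mem (h1 _), by rw [hbD _ _ f_mem, ← smul_smul, h2], fun hf => ?_⟩
    exact absurd (h.fixed_D' f_mem hf) hq

/-- auxiliary recursion -/
def rr (w : G) (bp : Q → Q) (dl : Q → G) : ℕ → Q → G
  | 0, _ => 1
  | n + 1, q => w * dl (w • bp q) * rr w bp dl n (w • bp q)

theorem exists_tree (h : NSetup G Q q0 s f w) : ∃ (t : Q → G) (Tr : Set Q),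
    t q0 = 1 ∧ (∀ q, t q • q0 = q) ∧ (∀ q, t (s • q) = s * t q) ∧
    (∀ q, f • q ≠ q → t (f • q) = f * t q) ∧
    (∀ q, q ∈ Tr → s • q ∈ Tr) ∧ (∀ q, q ∈ Tr → w • q ∈ Tr) ∧
    (∀ q ∈ Tr, t (w • q) = w * t q) ∧
    (∀ C : Q → Prop, C q0 → (∀ q, C q → C (s • q)) → (∀ q, C q → f • q ≠ q → C (f • q)) →
      (∀ q, C q → q ∈ Tr → C (w • q)) → ∀ q, C q) := by
  obtain ⟨bp, hbD, hb, hb0, hb1⟩ := h.exists_bp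
  obtain ⟨dl, d1, d2, d3, d4, d5, d6⟩ := h.exists_dl hbD hb
  have ub : ∀ q, bp (bp q) = bp q := by
    intro q
    obtain ⟨g, hg, hq⟩ := hb q
    have := hbD (bp q) g hg
    rw [← hq] at this; exact this.symm
  have hd : ∀ q, h.dist (bp q) = h.dist q := by
    intro q
    obtain ⟨g, hg, hq⟩ := hb q
    conv_rhs => rw [hq, h.dist_D _ hg]
  have hd0 : h.dist q0 = 0 := (h.dist_zero q0).2 ⟨1, one_mem _, by simp⟩
  have rD : ∀ n q, ∀ g ∈ D s f, rr w bp dl n (g • q) = rr w bp dl n q := by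
    intro n q g hg
    cases n with
    | zero => rfl
    | succ n => simp only [rr, hbD _ _ hg]
  have rq : ∀ n q, h.dist q = n → rr w bp dl n q • q0 = bp q := by
    intro n
    induction n with
    | zero => intro q hq; rw [hb0 q hq]; simp [rr]
    | succ n ih =>
      intro q hq
      have h1 := hb1 q (by omega)
      have h2 := ih (w • bp q) (by omega)
      rw [rr, ← smul_smul, h2, ← smul_smul, d2, h.ww]
  set t : Q → G := fun q => dl q * rr w bp dl (h.dist q) q with ht
  have tb : ∀ q, h.dist q ≠ 0 → t (bp q) = w * t (w • bp q) := by
    intro q hq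
    have h1 := hb1 q hq
    simp only [ht]
    rw [d4, hd, ← h1, one_mul, rr, ub, mul_assoc]
  have ts : ∀ q, t (s • q) = s * t q := by
    intro q
    simp only [ht]
    rw [d5, h.dist_D _ s_mem, rD _ _ _ s_mem, mul_assoc]
  have tw : ∀ q, t q = w * t (w • q) ↔ t (w • q) = w * t q := by
    intro q
    constructor
    · intro hh; rw [hh, ← mul_assoc, h.hw, one_mul]
    · intro hh; rw [hh, ← mul_assoc, h.hw, one_mul]
  refine ⟨t, {x | ∃ q, h.dist q ≠ 0 ∧ (x = bp q ∨ x = s • bp q ∨ x = w • bp q ∨ x = w • s • bp q)},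
    ?_, ?_, ts, ?_, ?_, ?_, ?_, ?_⟩
  · simp only [ht]
    have := d4 q0
    rw [hb0 q0 hd0] at this
    rw [hd0, this]; simp [rr]
  · intro q
    simp only [ht]
    rw [← smul_smul, rq _ _ rfl, d2]
  · intro q hq
    simp only [ht]
    rw [d6 q hq, h.dist_D _ f_mem, rD _ _ _ f_mem, mul_assoc]
  · rintro _ ⟨q, hq, rfl | rfl | rfl | rfl⟩ <;> refine ⟨q, hq, ?_⟩ 
    · simp
    · simp [h.ss]
    · simp [h.sw]
    · simp [h.ss, h.sw]
  · rintro _ ⟨q, hq, rfl | rfl | rfl | rfl⟩ <;> refine ⟨q, hq, ?_⟩ <;> simp [h.ww]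
  · have hx : ∀ x, t (w • x) = w * t x → t (w • s • x) = w * t (s • x) := by
      intro x hx
      rw [← h.sw, ts, hx, ts, ← mul_assoc, h.hsw, mul_assoc]
    have hx' : ∀ x, t (w • x) = w * t x → t (w • w • x) = w * t (w • x) := by
      intro x hx
      rw [h.ww, hx, ← mul_assoc, h.hw, one_mul]
    rintro _ ⟨q, hq, rfl | rfl | rfl | rfl⟩
    · exact (tw _).1 (tb q hq)
    · exact hx _ ((tw _).1 (tb q hq))
    · exact hx' _ ((tw _).1 (tb q hq))
    · exact hx' _ (hx _ ((tw _).1 (tb q hq)))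
  · intro C c0 cs cf cw
    have cD : ∀ q, C (bp q) → C q := by
      intro q hq
      rw [← d2 q]
      by_cases hf : f • q = q
      · rcases d3 q hf with h1 | h1
        · rw [h1, one_smul]; exact hq
        · rw [h1]; exact cs _ hq
      · have hfb : f • bp q ≠ bp q := by
          intro hh
          have := (h.fixed_D hh (d1 q)).1
          rw [d2] at this
          exact hf this
        have pw : ∀ i : ℕ, ∀ x, f • x ≠ x → C x → C (f ^ i • x) := by
          intro i
          induction i with
          | zero => intro x _ hx; simpa using hx
          | succ i ih =>
            intro x hx hc
            rw [pow_succ, ← smul_smul]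
            exact ih _ (fun hh => hx (h.fixed_D' f_mem hh)) (cf _ hc hx)
        obtain ⟨i, hi | hi⟩ := h.mem_D (d1 q)
        · rw [hi]; exact pw i _ hfb hq
        · rw [hi, ← smul_smul]
          exact pw i _ (fun hh => hfb (h.fixed_D' s_mem hh)) (cs _ hq)
    have : ∀ n q, h.dist q = n → C q := by
      intro n
      induction n with
      | zero => intro q hq; apply cD; rw [hb0 q hq]; exact c0
      | succ n ih =>
        intro q hq
        apply cD
        have h1 := hb1 q (by omega)
        have h2 := ih (w • bp q) (by omega)
        have h3 := cw _ h2 ⟨q, by omega, by simp⟩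
        rwa [h.ww] at h3
    intro q
    exact this _ q rfl

end NSetup

namespace NSetup

lemma exists_rep {Q : Type} (S : Setoid Q) :
    ∃ ρ : Q → Q, (∀ q, S (ρ q) q) ∧ ∀ q q', S q q' → ρ q = ρ q' :=
  ⟨fun q => (Quotient.mk S q).out, fun q => Quotient.mk_out q, fun _ _ hq => by
    have : Quotient.mk S _ = Quotient.mk S _ := Quotient.sound hq
    simp only [this]⟩

lemma zmod_lift {K : Type*} [Group K] (n : ℕ) (k : K) (hk : k ^ n = 1) :
    ∃ F : Multiplicative (ZMod n) →* K, F (Multiplicative.ofAdd 1) = k := by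
  let F0 : ℤ →+ Additive K := zmultiplesHom (Additive K) (Additive.ofMul k)
  have h0 : F0 n = 0 := by
    simp only [F0, zmultiplesHom_apply, natCast_zsmul]
    rw [← ofMul_pow, hk, ofMul_one]
  refine ⟨AddMonoidHom.toMultiplicativeLeft (ZMod.lift n ⟨F0, h0⟩), ?_⟩
  have : (ZMod.lift n ⟨F0, h0⟩) ((1 : ℤ) : ZMod n) = F0 1 := ZMod.lift_coe n ⟨F0, h0⟩ 1
  simp only [Int.cast_one] at this
  simp [this, F0]

lemma zmod_gen (n : ℕ) (x : Multiplicative (ZMod n)) :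
    ∃ k : ℤ, x = (Multiplicative.ofAdd (1 : ZMod n)) ^ k := by
  obtain ⟨k, hk⟩ := ZMod.intCast_surjective (Multiplicative.toAdd x)
  refine ⟨k, ?_⟩
  rw [← ofAdd_zsmul]
  apply Multiplicative.toAdd.injective
  simp [hk]

section cop
variable {ι : Type} (m : ι → ℕ)

/-- free product of cyclic groups -/
abbrev FP := Monoid.CoprodI (fun i => Multiplicative (ZMod (m i)))

/-- generator -/
def xg (i : ι) : FP m :=
  Monoid.CoprodI.of (M := fun i => Multiplicative (ZMod (m i))) (i := i) (Multiplicative.ofAdd 1)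

lemma xg_pow (i : ι) : xg m i ^ m i = 1 := by
  rw [xg, ← map_pow, ← ofAdd_nsmul]
  simp

lemma fp_lift {K : Type*} [Group K] (k : ι → K) (hk : ∀ i, k i ^ m i = 1) :
    ∃ η : FP m →* K, ∀ i, η (xg m i) = k i := by
  choose F hF using fun i => zmod_lift (m i) (k i) (hk i)
  exact ⟨Monoid.CoprodI.lift F, fun i => by rw [xg, Monoid.CoprodI.lift_of, hF]⟩

lemma fp_closure : Subgroup.closure (Set.range (xg m)) = ⊤ := by
  rw [eq_top_iff]
  rintro p -
  induction p using Monoid.CoprodI.induction_on with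
  | one => exact one_mem _
  | of i x =>
    obtain ⟨k, rfl⟩ := zmod_gen _ x
    rw [map_zpow]
    exact zpow_mem (Subgroup.subset_closure (Set.mem_range_self i)) k
  | mul x y hx hy => exact mul_mem hx hy
end cop

variable {G Q : Type} [Group G] [MulAction G Q] {q0 : Q} {s f w : G}

lemma equivar {A B : Type} (hg : Subgroup.closure {s, f, w} = ⊤) (Ψ : G →* Equiv.Perm A)
    (Ψ' : G →* Equiv.Perm B) (F : A → B)
    (h1 : ∀ x, F (Ψ s x) = Ψ' s (F x)) (h2 : ∀ x, F (Ψ f x) = Ψ' f (F x))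
    (h3 : ∀ x, F (Ψ w x) = Ψ' w (F x)) (g : G) : ∀ x, F (Ψ g x) = Ψ' g (F x) := by
  have hg : g ∈ Subgroup.closure {s, f, w} := by rw [hg]; trivial
  induction hg using Subgroup.closure_induction with
  | mem x hx => rcases hx with rfl | rfl | rfl <;> assumption
  | one => simp
  | mul x y _ _ hx hy => intro z; simp [hx, hy]
  | inv x _ hx =>
    intro z
    have := hx (Ψ x⁻¹ z)
    rw [← Equiv.Perm.mul_apply, ← map_mul, mul_inv_cancel, map_one, Equiv.Perm.one_apply] at this
    rw [this, ← Equiv.Perm.mul_apply, ← map_mul, inv_mul_cancel, map_one, Equiv.Perm.one_apply]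

theorem main (h : NSetup G Q q0 s f w)
    (hlift : ∀ (X : Type) [Group X] (s' f' w' : X), s' * s' = 1 → w' * w' = 1 → f' * f' * f' = 1 →
      s' * f' = f' * f' * s' → s' * w' = w' * s' →
      ∃ Ψ : G →* X, Ψ s = s' ∧ Ψ f = f' ∧ Ψ w = w') :
    ∃ (ι : Type) (m : ι → ℕ), (∀ i, m i = 2 ∨ m i = 3 ∨ m i = 0) ∧
      Nonempty (MulAction.stabilizer G q0 ≃* FP m) ∧
      ∃ t : Q → G, (∀ q, t q • q0 = q) ∧
        (Finite ι → {q | t (f • q) ≠ f * t q ∨ t (w • q) ≠ w * t q}.Finite) := by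
  classical
  obtain ⟨t, Tr, t0, tq, ts, tf, Trs, Trw, tw, ind⟩ := h.exists_tree
  have Trs' : ∀ q, s • q ∈ Tr ↔ q ∈ Tr := fun q => ⟨fun hq => by
    have := Trs _ hq; rwa [h.ss] at this, Trs q⟩
  have Trw' : ∀ q, w • q ∈ Tr ↔ q ∈ Tr := fun q => ⟨fun hq => by
    have := Trw _ hq; rwa [h.ww] at this, Trw q⟩
  obtain ⟨ρ3, r31, r32⟩ := exists_rep (Q := Q) 
    { r := fun a b => a = b ∨ a = s • b
      iseqv := 
        { refl := fun _ => Or.inl rfl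
          symm := by rintro a b (rfl | rfl) <;> simp [h.ss]
          trans := by rintro a b c (rfl | rfl) (rfl | rfl) <;> simp [h.ss] } }
  obtain ⟨ρ2, r21, r22⟩ := exists_rep (Q := Q) 
    { r := fun a b => a = b ∨ a = s • b ∨ a = w • b ∨ a = w • s • b
      iseqv := 
        { refl := fun _ => Or.inl rfl
          symm := by rintro a b (rfl | rfl | rfl | rfl) <;> simp [h.ss, h.ww, h.sw]
          trans := by 
            rintro a b c (rfl | rfl | rfl | rfl) (rfl | rfl | rfl | rfl) <;> 
              simp [h.ss, h.ww, h.sw] } }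
  replace r31 : ∀ q, ρ3 q = q ∨ ρ3 q = s • q := r31
  replace r32 : ∀ q, ρ3 (s • q) = ρ3 q := fun q => r32 _ _ (Or.inr rfl)
  replace r21 : ∀ q, ρ2 q = q ∨ ρ2 q = s • q ∨ ρ2 q = w • q ∨ ρ2 q = w • s • q := r21
  have r2s : ∀ q, ρ2 (s • q) = ρ2 q := fun q => r22 _ _ (Or.inr (Or.inl rfl))
  have r2w : ∀ q, ρ2 (w • q) = ρ2 q := fun q => r22 _ _ (Or.inr (Or.inr (Or.inl rfl)))
  have r33 : ∀ q, ρ3 (ρ3 q) = ρ3 q := by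
    intro q; rcases r31 q with e | e
    · rw [e, e]
    · conv_lhs => rw [e, r32]
  have r2r : ∀ q, ρ2 (ρ2 q) = ρ2 q := by
    intro q; rcases r21 q with e | e | e | e
    · rw [e, e]
    · conv_lhs => rw [e, r2s]
    · conv_lhs => rw [e, r2w]
    · conv_lhs => rw [e, r2w, r2s]
  have fr3 : ∀ q, f • q = q → f • ρ3 q = ρ3 q := by
    intro q hq; rcases r31 q with e | e
    · rw [e, hq]
    · rw [e, h.fixed_s hq]
  have Tr2 : ∀ q, ρ2 q ∈ Tr ↔ q ∈ Tr := by
    intro q; rcases r21 q with e | e | e | e <;> rw [e] <;> simp [Trs', Trw']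
  let ι : Type := {q : Q // f • q = q ∧ ρ3 q = q} ⊕ {q : Q // q ∉ Tr ∧ ρ2 q = q}
  let m : ι → ℕ := Sum.elim (fun _ => 3) (fun q => if w • q.1 = q.1 then 2 else 0)
  let A : Q → FP m := fun q => if hq : f • q = q ∧ ρ3 q = q then xg m (Sum.inl ⟨q, hq⟩) else 1
  let B : Q → FP m := fun q => if hq : q ∉ Tr ∧ ρ2 q = q then xg m (Sum.inr ⟨q, hq⟩) else 1
  have hA3 : ∀ q, A q * A q * A q = 1 := by
    intro q
    simp only [A]
    split_ifs with hq
    · have := xg_pow m (Sum.inl ⟨q, hq⟩)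
      simp only [m, Sum.elim_inl] at this
      rw [pow_succ, pow_two] at this
      exact this
    · simp
  have hB2 : ∀ q, w • q = q → B q * B q = 1 := by
    intro q hw
    simp only [B]
    split_ifs with hq
    · have := xg_pow m (Sum.inr ⟨q, hq⟩)
      simp only [m, Sum.elim_inr, hw, if_true] at this
      rw [pow_two] at this
      exact this
    · simp
  let a : Q → FP m := fun q => if f • q = q then (if ρ3 q = q then A q else (A (ρ3 q))⁻¹) else 1
  let b : Q → FP m := fun q => if q ∈ Tr then 1 else 
    (if ρ2 q = q ∨ ρ2 q = s • q then B (ρ2 q) else (B (ρ2 q))⁻¹)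
  have a1 : ∀ q, f • q ≠ q → a q = 1 := fun q hq => if_neg hq
  have a2 : ∀ q, a (s • q) = (a q)⁻¹ := by
    intro q
    by_cases hq : f • q = q
    · have hq' := h.fixed_s hq
      simp only [a, if_pos hq, if_pos hq', r32]
      rcases r31 q with e | e
      · rw [e, if_pos rfl, if_neg (h.fs q).symm]
      · rw [e, if_pos rfl, if_neg (h.fs q), inv_inv]
    · rw [a1 q hq, a1, inv_one]
      exact fun hh => hq (h.fixed_D' s_mem hh)
  have a3 : ∀ q, f • q = q → a q * a q * a q = 1 := by
    intro q hq
    simp only [a, if_pos hq]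
    split_ifs
    · exact hA3 q
    · rw [← _root_.mul_inv_rev, ← _root_.mul_inv_rev, ← mul_assoc, hA3, inv_one]
  have b1 : ∀ q, q ∈ Tr → b q = 1 := fun q hq => if_pos hq
  have b2 : ∀ q, b (s • q) = b q := by
    intro q
    simp only [b, Trs', r2s, h.ss]
    simp only [or_comm]
  have b3 : ∀ q, b (w • q) * b q = 1 := by
    intro q
    by_cases hq : q ∈ Tr
    · rw [b1 q hq, b1 _ (Trw q hq), one_mul]
    simp only [b, Trw', r2w, if_neg hq]
    by_cases hw : w • q = q
    · have : w • ρ2 q = ρ2 q := by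
        rcases r21 q with e | e | e | e <;> rw [e] <;> simp [← h.sw, hw]
      rw [hw]
      have h2 := hB2 _ this
      split_ifs
      · exact h2
      · rw [← _root_.mul_inv_rev, h2, inv_one]
    · have e1 : w • q ≠ s • q := h.fws q
      have e2 : s • w • q ≠ q := by
        intro e; apply e1; rw [← h.ss (w • q), e]
      have e3 : s • w • q ≠ s • q := by simpa using hw
      have e4 : s • w • q ≠ w • q := h.fs _
      rcases r21 q with e | e | e | e <;> rw [e]
      · rw [if_neg, if_pos (Or.inl rfl), inv_mul_cancel]
        push Not; exact ⟨Ne.symm hw, e2.symm⟩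
      · rw [if_neg, if_pos (Or.inr rfl), inv_mul_cancel]
        push Not; exact ⟨Ne.symm e1, e3.symm⟩
      · rw [if_pos (Or.inl rfl), if_neg, mul_inv_cancel]
        push Not; exact ⟨hw, e1⟩
      · rw [← h.sw, if_pos (Or.inr rfl), if_neg, mul_inv_cancel]
        push Not; exact ⟨e2, e3⟩
  -- the action
  have fS : Function.Involutive (fun x : Q × FP m => (s • x.1, x.2)) := by
    rintro ⟨q, p⟩; simp [h.ss]
  have fW : Function.Involutive (fun x : Q × FP m => (w • x.1, b x.1 * x.2)) := by
    rintro ⟨q, p⟩; simp [h.ww, ← mul_assoc, b3]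
  have fF : ∀ x : Q × FP m, (fun x : Q × FP m => (f • x.1, a x.1 * x.2))^[3] x = x := by
    rintro ⟨q, p⟩
    simp only [Function.iterate_succ, Function.iterate_zero, Function.comp_apply, id, h.fff]
    by_cases hq : f • q = q
    · rw [hq, hq, ← mul_assoc, ← mul_assoc, a3 q hq, one_mul]
    · have h1 : f • f • q ≠ f • q := fun hh => hq (h.fixed_D' f_mem hh)
      have h2 : f • f • f • q ≠ f • f • q := fun hh => h1 (h.fixed_D' f_mem hh)
      rw [a1 _ hq, a1 _ h1, a1 _ h2]; simp
  let S : Equiv.Perm (Q × FP m) := fS.toPerm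
  let W : Equiv.Perm (Q × FP m) := fW.toPerm
  let F : Equiv.Perm (Q × FP m) :=
    ⟨fun x => (f • x.1, a x.1 * x.2), (fun x : Q × FP m => (f • x.1, a x.1 * x.2))^[2],
      fun x => fF x, fun x => fF x⟩
  have Sa : ∀ q p, S (q, p) = (s • q, p) := fun _ _ => rfl
  have Wa : ∀ q p, W (q, p) = (w • q, b q * p) := fun _ _ => rfl
  have Fa : ∀ q p, F (q, p) = (f • q, a q * p) := fun _ _ => rfl
  obtain ⟨Ψ, Ψs, Ψf, Ψw⟩ := hlift (Equiv.Perm (Q × FP m)) S F W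
    (by ext1 x; exact fS x) (by ext1 x; exact fW x) (by ext1 x; exact fF x)
    (by
      ext1 ⟨q, p⟩
      simp only [Equiv.Perm.mul_apply, Sa, Fa, h.sf]
      by_cases hq : f • q = q
      · have hq' := h.fixed_s hq
        rw [hq', a2, ← mul_assoc]
        have := a3 q hq
        have h4 : a q = (a q)⁻¹ * (a q)⁻¹ := by
          rw [← _root_.mul_inv_rev, eq_inv_iff_mul_eq_one, ← mul_assoc, this]
        rw [← h4]
      · have h1 : f • s • q ≠ s • q := fun hh => hq (h.fixed_D' s_mem hh)
        have h2 : f • f • s • q ≠ f • s • q := fun hh => h1 (h.fixed_D' f_mem hh)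
        rw [a1 _ hq, a1 _ h1, a1 _ h2]; simp)
    (by
      ext1 ⟨q, p⟩
      simp only [Equiv.Perm.mul_apply, Sa, Wa, h.sw, b2])
  -- the map to G
  have rb : ∀ q, q ∉ Tr → (ρ2 q ∉ Tr ∧ ρ2 (ρ2 q) = ρ2 q) := fun q hq => 
    ⟨fun hh => hq ((Tr2 q).1 hh), r2r q⟩
  have ra : ∀ q, f • q = q → (f • ρ3 q = ρ3 q ∧ ρ3 (ρ3 q) = ρ3 q) := fun q hq => 
    ⟨fr3 q hq, r33 q⟩
  obtain ⟨η, hη⟩ := fp_lift m (K := G) (Sum.elim (fun q => (t q.1)⁻¹ * f * t q.1)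
      (fun q => (t (w • q.1))⁻¹ * w * t q.1)) (by
    rintro (⟨q, hq⟩ | ⟨q, hq⟩)
    · simp only [m, Sum.elim_inl]
      have := h.hf
      calc ((t q)⁻¹ * f * t q) ^ 3 = (t q)⁻¹ * (f * f * f) * t q := by rw [pow_succ, pow_two]; group
        _ = 1 := by rw [this]; group
    · simp only [m, Sum.elim_inr]
      split_ifs with hw
      · have := h.hw
        rw [hw]
        calc ((t q)⁻¹ * w * t q) ^ 2 = (t q)⁻¹ * (w * w) * t q := by rw [pow_two]; group
          _ = 1 := by rw [this]; group
      · simp)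
  have ηA : ∀ q, f • q = q → ρ3 q = q → η (A q) = (t q)⁻¹ * f * t q := by
    intro q h1 h2
    simp only [A, dif_pos (And.intro h1 h2), hη, Sum.elim_inl]
  have ηB : ∀ q, q ∉ Tr → ρ2 q = q → η (B q) = (t (w • q))⁻¹ * w * t q := by
    intro q h1 h2
    simp only [B, dif_pos (And.intro h1 h2), hη, Sum.elim_inr]
  have eqa : ∀ q, t (f • q) * η (a q) = f * t q := by
    intro q
    by_cases hq : f • q = q
    · simp only [a, if_pos hq]
      rcases r31 q with e | e
      · rw [if_pos e, ηA q hq e, hq]; group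
      · have hne : ρ3 q ≠ q := by rw [e]; exact h.fs q
        rw [if_neg hne, map_inv, ηA _ (ra q hq).1 (ra q hq).2, hq, e, ts]
        have h5 : s * f⁻¹ * s = f := by
          rw [h.f_inv, pow_two]
          rw [mul_assoc, ← h.hsf, ← mul_assoc, h.hs, one_mul]
        calc t q * ((s * t q)⁻¹ * f * (s * t q))⁻¹ = s⁻¹ * f⁻¹ * s * t q := by group
          _ = f * t q := by rw [h.s_inv, h5]
    · rw [a1 q hq, map_one, mul_one, tf q hq]
  have eqb : ∀ q, t (w • q) * η (b q) = w * t q := by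
    intro q
    by_cases hq : q ∈ Tr
    · rw [b1 q hq, map_one, mul_one, tw q hq]
    have hr := rb q hq
    have wsw : w⁻¹ = w := h.w_inv
    -- case of the representative or its s-translate
    have base : ∀ q, q ∉ Tr → (ρ2 q = q ∨ ρ2 q = s • q) → t (w • q) * η (b q) = w * t q := by
      intro q hq hh
      have hr := rb q hq
      simp only [b, if_neg hq, if_pos hh]
      rw [ηB _ hr.1 hr.2]
      rcases hh with e | e
      · rw [e]; group
      · rw [e, ← h.sw, ts, ts]
        calc t (w • q) * ((s * t (w • q))⁻¹ * w * (s * t q)) = s⁻¹ * (w * s) * t q := by group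
          _ = w * t q := by rw [← h.hsw]; group
    by_cases hh : ρ2 q = q ∨ ρ2 q = s • q
    · exact base q hq hh
    · have hh' : ρ2 (w • q) = w • q ∨ ρ2 (w • q) = s • w • q := by
        rw [r2w]
        rcases r21 q with e | e | e | e
        · exact absurd (Or.inl e) hh
        · exact absurd (Or.inr e) hh
        · exact Or.inl e
        · right; rw [h.sw]; exact e
      have := base (w • q) (by rwa [Trw']) hh'
      rw [h.ww] at this
      have h6 : b q = (b (w • q))⁻¹ := (inv_eq_of_mul_eq_one_right (b3 q)).symm
      rw [h6, map_inv, mul_inv_eq_iff_eq_mul]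
      rw [mul_assoc, this, ← mul_assoc, h.hw, one_mul]
  let L : G →* Equiv.Perm G := MulAction.toPermHom G G
  have La : ∀ g x, L g x = g * x := fun _ _ => rfl
  have Φeq : ∀ g x, t (Ψ g x).1 * η (Ψ g x).2 = g * (t x.1 * η x.2) := by
    intro g x
    refine equivar h.gen Ψ L (fun x => t x.1 * η x.2) ?_ ?_ ?_ g x
    · rintro ⟨q, p⟩; rw [Ψs, Sa, La]; simp only [ts, mul_assoc]
    · rintro ⟨q, p⟩; rw [Ψf, Fa, La]; simp only [map_mul, ← mul_assoc, eqa]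
    · rintro ⟨q, p⟩; rw [Ψw, Wa, La]; simp only [map_mul, ← mul_assoc, eqb]
  have fsteq : ∀ g x, (Ψ g x).1 = g • x.1 := by
    intro g x
    refine equivar h.gen Ψ (MulAction.toPermHom G Q) Prod.fst ?_ ?_ ?_ g x
    · rintro ⟨q, p⟩; rw [Ψs, Sa]; rfl
    · rintro ⟨q, p⟩; rw [Ψf, Fa]; rfl
    · rintro ⟨q, p⟩; rw [Ψw, Wa]; rfl
  have req : ∀ p' g x, (fun x : Q × FP m => (x.1, x.2 * p')) (Ψ g x) = Ψ g (x.1, x.2 * p') := by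
    intro p' g x
    refine equivar h.gen Ψ Ψ (fun x : Q × FP m => (x.1, x.2 * p')) ?_ ?_ ?_ g x
    · rintro ⟨q, p⟩; simp only [Ψs, Sa]
    · rintro ⟨q, p⟩; simp only [Ψf, Fa, mul_assoc]
    · rintro ⟨q, p⟩; simp only [Ψw, Wa, mul_assoc]
  have star : ∀ q, Ψ (t q) (q0, 1) = (q, 1) := by
    apply ind
    · rw [t0]; simp
    · intro q hq; rw [ts, map_mul, Equiv.Perm.mul_apply, hq, Ψs, Sa]
    · intro q hq hf; rw [tf q hf, map_mul, Equiv.Perm.mul_apply, hq, Ψf, Fa, a1 q hf, one_mul]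
    · intro q hq hT; rw [tw q hT, map_mul, Equiv.Perm.mul_apply, hq, Ψw, Wa, b1 q hT, one_mul]
  have star' : ∀ q p, Ψ (t q) (q0, p) = (q, p) := by
    intro q p
    have := req p (t q) (q0, 1)
    rw [star] at this
    simpa using this.symm
  have star'' : ∀ q p, Ψ (t q)⁻¹ (q, p) = (q0, p) := by
    intro q p
    rw [map_inv, Equiv.Perm.inv_eq_iff_eq, star']
  have key : ∀ p p', Ψ (η p) (q0, p') = (q0, p * p') := by
    intro p
    have hp : p ∈ Subgroup.closure (Set.range (xg m)) := by rw [fp_closure]; trivial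
    induction hp using Subgroup.closure_induction with
    | mem x hx =>
      intro p'
      obtain ⟨⟨q, hq⟩ | ⟨q, hq⟩, rfl⟩ := hx
      · have hA : A q = xg m (Sum.inl ⟨q, hq⟩) := dif_pos hq
        have ha : a q = A q := by simp only [a, if_pos hq.1, if_pos hq.2]
        rw [← hA, ηA q hq.1 hq.2, map_mul, map_mul, Equiv.Perm.mul_apply, Equiv.Perm.mul_apply,
          star', Ψf, Fa, hq.1, star'', ha]
      · have hB : B q = xg m (Sum.inr ⟨q, hq⟩) := dif_pos hq
        have hb : b q = B q := by simp only [b, if_neg hq.1, hq.2, true_or, if_true]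
        rw [← hB, ηB q hq.1 hq.2, map_mul, map_mul, Equiv.Perm.mul_apply, Equiv.Perm.mul_apply,
          star', Ψw, Wa, star'', hb]
    | one => simp
    | mul x y _ _ hx hy => intro p'; rw [map_mul, map_mul, Equiv.Perm.mul_apply, hy, hx, mul_assoc]
    | inv x _ hx => intro p'; rw [map_inv, map_inv, Equiv.Perm.inv_eq_iff_eq, hx]; simp
  have inj : Function.Injective η := by
    rw [injective_iff_map_eq_one]
    intro p hp
    have := key p 1
    rw [hp, map_one] at this
    simpa using this.symm
  have hrange : η.range = MulAction.stabilizer G q0 := by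
    ext g
    constructor
    · rintro ⟨p, rfl⟩
      rw [MulAction.mem_stabilizer_iff, ← fsteq (η p) (q0, 1), key]
    · intro hg
      refine ⟨(Ψ g (q0, 1)).2, ?_⟩
      have := Φeq g (q0, 1)
      rw [fsteq] at this
      simp only [MulAction.mem_stabilizer_iff.1 hg, t0, map_one, mul_one, one_mul] at this
      exact this
  refine ⟨ι, m, ?_, ⟨((MonoidHom.ofInjective inj).trans (MulEquiv.subgroupCongr hrange)).symm⟩,
    t, tq, ?_⟩
  · rintro (i | i)
    · simp [m]
    · simp only [m, Sum.elim_inr]; split_ifs <;> simp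
  · intro hfin
    let pt : ι → Q := Sum.elim (fun q => q.1) (fun q => q.1)
    refine Set.Finite.subset (Set.finite_iUnion (f := fun i : ι => 
      ({pt i, s • pt i, w • pt i, w • s • pt i} : Set Q)) (fun i => Set.toFinite _)) ?_
    rintro q (hq | hq)
    · have hf : f • q = q := by
        by_contra hh; exact hq (tf q hh)
      refine Set.mem_iUnion.2 ⟨Sum.inl ⟨ρ3 q, ra q hf⟩, ?_⟩
      simp only [pt, Sum.elim_inl]
      rcases r31 q with e | e <;> rw [e] <;> simp [h.ss]
    · have hT : q ∉ Tr := fun hh => hq (tw q hh)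
      refine Set.mem_iUnion.2 ⟨Sum.inr ⟨ρ2 q, rb q hT⟩, ?_⟩
      simp only [pt, Sum.elim_inr]
      rcases r21 q with e | e | e | e <;> rw [e] <;> simp [h.ss, h.ww, h.sw]

end NSetup

/-- sigma -/
def sigGL : GL2Z := ⟨!![0,1;1,0], !![0,1;1,0], by decide, by decide⟩
def sig : Mhat := pr sigGL

lemma pr_eq_iff (A B : GL2Z) : pr A = pr B ↔ A = B ∨ A = -B := by
  have : pr A = pr B ↔ A⁻¹ * B ∈ pmI := QuotientGroup.eq
  rw [this, pmI, Subgroup.mem_zpowers_iff]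
  constructor
  · rintro ⟨k, hk⟩
    have hB : B = A * (-1) ^ k := by rw [hk]; group
    rcases Int.even_or_odd k with h | h
    · left; rw [hB, h.neg_one_zpow, mul_one]
    · right; rw [hB, h.neg_one_zpow]; simp
  · rintro (rfl | rfl)
    · exact ⟨0, by simp⟩
    · refine ⟨1, ?_⟩
      rw [zpow_one, eq_inv_mul_iff_mul_eq]; simp

lemma rel_ss : sig * sig = 1 := by
  rw [sig, ← map_mul, ← map_one pr, pr_eq_iff]; left; apply Units.ext; decide
lemma rel_ww : omega * omega = 1 := by
  rw [omega, ← map_mul, ← map_one pr, pr_eq_iff]; right; apply Units.ext; decide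
lemma rel_fff : phi * phi * phi = 1 := by
  rw [phi, ← map_mul, ← map_mul, ← map_one pr, pr_eq_iff]; right; apply Units.ext; decide
lemma rel_sf : sig * phi = phi * phi * sig := by
  rw [phi, sig, ← map_mul, ← map_mul, ← map_mul, pr_eq_iff]; right; apply Units.ext; decide
lemma rel_sw : sig * omega = omega * sig := by
  rw [omega, sig, ← map_mul, ← map_mul, pr_eq_iff]; right; apply Units.ext; decide
lemma nu_eq : nu = omega * sig := by
  rw [omega, sig, nu, ← map_mul, pr_eq_iff]; left; apply Units.ext; decide
lemma tau_eq : tau = omega * phi := by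
  rw [omega, phi, tau, ← map_mul, pr_eq_iff]; right; apply Units.ext; decide

lemma gen_top : Subgroup.closure {sig, phi, omega} = ⊤ := by
  set K := Subgroup.closure {sig, phi, omega} with hK
  have hs : sig ∈ K := Subgroup.subset_closure (by simp)
  have hf : phi ∈ K := Subgroup.subset_closure (by simp)
  have hw : omega ∈ K := Subgroup.subset_closure (by simp)
  have hn : nu ∈ K := by rw [nu_eq]; exact mul_mem hw hs
  have ht : tau ∈ K := by rw [tau_eq]; exact mul_mem hw hf
  have hSL : ∀ A : Matrix.SpecialLinearGroup (Fin 2) ℤ,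
      pr (Matrix.SpecialLinearGroup.toGL A) ∈ K := by
    intro A
    have hA : A ∈ Subgroup.closure {ModularGroup.S, ModularGroup.T} := by
      rw [_root_.SpecialLinearGroup.SL2Z_generators]; trivial
    induction hA using Subgroup.closure_induction with
    | mem x hx =>
      rcases hx with rfl | rfl
      · have : Matrix.SpecialLinearGroup.toGL ModularGroup.S = omegaGL := by
          apply Units.ext; decide
        rw [this]; exact hw
      · have : Matrix.SpecialLinearGroup.toGL ModularGroup.T = tauGL := by
          apply Units.ext; decide
        rw [this]; exact ht
    | one => simp
    | mul x y _ _ hx hy => rw [map_mul, map_mul]; exact mul_mem hx hy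
    | inv x _ hx => rw [map_inv, map_inv]; exact inv_mem hx
  have hdet1 : ∀ A : GL2Z, A.1.det = 1 → pr A ∈ K := by
    intro A hA
    have : Matrix.SpecialLinearGroup.toGL ⟨A.1, hA⟩ = A := by
      apply Units.ext; rfl
    rw [← this]; exact hSL _
  rw [eq_top_iff]
  rintro g -
  obtain ⟨A, rfl⟩ := QuotientGroup.mk'_surjective pmI g
  change pr A ∈ K
  have hu : IsUnit A.1.det := (Matrix.isUnit_iff_isUnit_det _).1 A.isUnit
  rcases Int.isUnit_iff.1 hu with h | h
  · exact hdet1 A h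
  · have h2 : pr (nuGL * A) ∈ K := by
      apply hdet1
      rw [Units.val_mul, Matrix.det_mul, h]
      have : nuGL.1.det = -1 := by decide
      rw [this]; norm_num
    rw [map_mul] at h2
    exact (Subgroup.mul_mem_cancel_left K hn).1 h2

/-- classes with sign condition on the first column -/
def colset (b : Bool) : Set Mhat :=
  {g | ∃ A : GL2Z, pr A = g ∧ if b then 0 < A.1 0 0 * A.1 1 0 else A.1 0 0 * A.1 1 0 < 0}

/-- 2 and 3 -/
def m23 (b : Bool) : ℕ := if b then 2 else 3

lemma col_disj : Disjoint (colset true) (colset false) := by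
  rw [Set.disjoint_left]
  rintro g ⟨A, rfl, hA⟩ ⟨B, hB, hB'⟩
  rcases (pr_eq_iff B A).1 hB with rfl | rfl
  · simp at hA hB'; linarith
  · simp at hA hB'; linarith

lemma zmod2_cases (x : Multiplicative (ZMod 2)) (hx : x ≠ 1) : x = Multiplicative.ofAdd 1 := by
  revert x; decide
lemma zmod3_cases (x : Multiplicative (ZMod 3)) (hx : x ≠ 1) :
    x = Multiplicative.ofAdd 1 ∨ x = (Multiplicative.ofAdd 1) ^ 2 := by
  revert x; decide

lemma pingpong (j : NSetup.FP m23 →* Mhat) (h2 : j (NSetup.xg m23 true) = omega)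
    (h3 : j (NSetup.xg m23 false) = phi) : Function.Injective j := by
  have hj : j = Monoid.CoprodI.lift (fun i => j.comp (Monoid.CoprodI.of (i := i))) := by
    apply Monoid.CoprodI.ext_hom
    intro i
    ext x
    simp
  have hw : ∀ g ∈ colset false, omega * g ∈ colset true := by
    rintro _ ⟨A, rfl, hA⟩
    refine ⟨omegaGL * A, by rw [map_mul]; rfl, ?_⟩
    simp [omegaGL, Matrix.mul_apply, Fin.sum_univ_two] at hA ⊢
    linarith
  have hf : ∀ g ∈ colset true, phi * g ∈ colset false := by
    rintro _ ⟨A, rfl, hA⟩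
    refine ⟨phiGL * A, by rw [map_mul]; rfl, ?_⟩
    simp [phiGL, Matrix.mul_apply, Fin.sum_univ_two] at hA ⊢
    nlinarith [sq_nonneg (A.1 1 0)]
  have hff : ∀ g ∈ colset true, phi ^ 2 * g ∈ colset false := by
    rintro _ ⟨A, rfl, hA⟩
    refine ⟨phiGL * phiGL * A, by rw [map_mul, map_mul, pow_two]; rfl, ?_⟩
    simp [phiGL, Matrix.mul_apply, Fin.sum_univ_two] at hA ⊢
    nlinarith [sq_nonneg (A.1 0 0)]
  have e2 : j.comp (Monoid.CoprodI.of (i := true)) (Multiplicative.ofAdd (1 : ZMod 2)) = omega := h2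
  have e3 : j.comp (Monoid.CoprodI.of (i := false)) (Multiplicative.ofAdd (1 : ZMod 3)) = phi := h3
  rw [hj]
  refine Monoid.CoprodI.lift_injective_of_ping_pong _ (Or.inr ⟨false, ?_⟩) colset ?_ ?_ ?_
  · change 3 ≤ Cardinal.mk (ZMod 3)
    rw [Cardinal.mk_fintype, ZMod.card]; norm_num
  · have hk : ∃ g, g ∈ colset true := 
      ⟨pr ⟨!![1,0;1,1], !![1,0;-1,1], by decide, by decide⟩, _, rfl, by simp⟩
    rintro (_ | _)
    · obtain ⟨g, hg⟩ := hk
      exact ⟨_, hf g hg⟩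
    · exact hk
  · rintro (_ | _) (_ | _) hne
    · exact absurd rfl hne
    · exact col_disj.symm
    · exact col_disj
    · exact absurd rfl hne
  · rintro (_ | _) (_ | _) hne
    · exact absurd rfl hne
    · rintro x hx _ ⟨g, hg, rfl⟩
      rcases zmod3_cases x hx with e | e
      · have : j.comp (Monoid.CoprodI.of (i := false)) x = phi := by rw [e]; exact e3
        simp only [this]; exact hf g hg
      · have : j.comp (Monoid.CoprodI.of (i := false)) x = phi ^ 2 := by
          exact (congrArg _ e).trans ((map_pow (j.comp (Monoid.CoprodI.of (i := false)))
            (Multiplicative.ofAdd (1 : ZMod (m23 false))) 2).trans (congrArg (· ^ 2) e3))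
        simp only [this]; exact hff g hg
    · rintro x hx _ ⟨g, hg, rfl⟩
      have : j.comp (Monoid.CoprodI.of (i := true)) x = omega := by
        rw [zmod2_cases x hx]; exact e2
      simp only [this]; exact hw g hg
    · exact absurd rfl hne

/-- determinant -/
lemma det_lift : ∃ δ : Mhat →* ℤˣ, δ sig = -1 ∧ δ phi = 1 ∧ δ omega = 1 := by
  refine ⟨QuotientGroup.lift pmI (Matrix.GeneralLinearGroup.det) ?_, ?_, ?_, ?_⟩
  · intro x hx
    obtain ⟨k, rfl⟩ := Subgroup.mem_zpowers_iff.1 hx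
    have : Matrix.GeneralLinearGroup.det (-1 : GL2Z) = 1 := by apply Units.ext; decide
    rw [MonoidHom.mem_ker, map_zpow, this, _root_.one_zpow]
  · change Matrix.GeneralLinearGroup.det sigGL = -1
    apply Units.ext; decide
  · change Matrix.GeneralLinearGroup.det phiGL = 1
    apply Units.ext; decide
  · change Matrix.GeneralLinearGroup.det omegaGL = 1
    apply Units.ext; decide

theorem Mhat_lift (X : Type) [Group X] (s' f' w' : X) (hs : s' * s' = 1) (hw : w' * w' = 1)
    (hf : f' * f' * f' = 1) (hsf : s' * f' = f' * f' * s') (hsw : s' * w' = w' * s') :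
    ∃ Ψ : Mhat →* X, Ψ sig = s' ∧ Ψ phi = f' ∧ Ψ omega = w' := by
  obtain ⟨J, hJ⟩ := NSetup.fp_lift m23 (K := Mhat × X)
    (fun b => if b then (omega, w') else (phi, f')) (by
      rintro (_ | _)
      · simp [m23, pow_succ, rel_fff, hf]
      · simp [m23, pow_succ, rel_ww, hw])
  have hJt : J (NSetup.xg m23 true) = (omega, w') := by rw [hJ]; simp
  have hJf : J (NSetup.xg m23 false) = (phi, f') := by rw [hJ]; simp
  let π : Mhat × X →* Mhat := MonoidHom.fst Mhat X
  have hinj : Function.Injective (π.comp J) := by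
    apply pingpong
    · simp [hJt, π]
    · simp [hJf, π]
  obtain ⟨δ, ds, df, dw⟩ := det_lift
  have hδ : ∀ p, δ (J p).1 = 1 := by
    intro p
    have hp : p ∈ Subgroup.closure (Set.range (NSetup.xg m23)) := by
      rw [NSetup.fp_closure]; trivial
    induction hp using Subgroup.closure_induction with
    | mem x hx =>
      obtain ⟨b, rfl⟩ := hx
      cases b
      · rw [hJf, df]
      · rw [hJt, dw]
    | one => simp
    | mul x y _ _ hx hy => simp [hx, hy]
    | inv x _ hx => simp [hx]
  let a : Mhat × X := (sig, s')
  have ha : a * a = 1 := by simp only [a, Prod.mk_mul_mk, rel_ss, hs]; rfl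
  have hconj : ∀ p, ∃ p', a * J p = J p' * a := by
    intro p
    have hp : p ∈ Subgroup.closure (Set.range (NSetup.xg m23)) := by
      rw [NSetup.fp_closure]; trivial
    induction hp using Subgroup.closure_induction with
    | mem x hx =>
      obtain ⟨b, rfl⟩ := hx
      cases b
      · refine ⟨NSetup.xg m23 false * NSetup.xg m23 false, ?_⟩
        rw [map_mul, hJf]
        simp only [a, Prod.mk_mul_mk, rel_sf, hsf]
      · refine ⟨NSetup.xg m23 true, ?_⟩
        rw [hJt]
        simp only [a, Prod.mk_mul_mk, rel_sw, hsw]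
    | one => exact ⟨1, by simp⟩
    | mul x y _ _ hx hy =>
      obtain ⟨x', hx⟩ := hx
      obtain ⟨y', hy⟩ := hy
      exact ⟨x' * y', by rw [map_mul, ← mul_assoc, hx, mul_assoc, hy, map_mul, mul_assoc]⟩
    | inv x _ hx =>
      obtain ⟨x', hx⟩ := hx
      refine ⟨x'⁻¹, ?_⟩
      rw [map_inv, map_inv, eq_inv_mul_iff_mul_eq, ← mul_assoc, ← hx, mul_assoc, mul_inv_cancel,
        mul_one]
  let K : Subgroup (Mhat × X) := Subgroup.closure {a, (phi, f'), (omega, w')}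
  have hKform : ∀ x ∈ K, ∃ p, x = J p ∨ x = J p * a := by
    intro x hx
    induction hx using Subgroup.closure_induction with
    | mem x hx =>
      rcases hx with rfl | rfl | rfl
      · exact ⟨1, by simp⟩
      · exact ⟨_, Or.inl hJf.symm⟩
      · exact ⟨_, Or.inl hJt.symm⟩
    | one => exact ⟨1, by simp⟩
    | mul x y _ _ hx hy =>
      obtain ⟨p, rfl | rfl⟩ := hx <;> obtain ⟨r, rfl | rfl⟩ := hy
      · exact ⟨p * r, Or.inl (by rw [map_mul])⟩
      · exact ⟨p * r, Or.inr (by rw [map_mul, mul_assoc])⟩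
      · obtain ⟨r', hr⟩ := hconj r
        exact ⟨p * r', Or.inr (by rw [mul_assoc, hr, map_mul, mul_assoc])⟩
      · obtain ⟨r', hr⟩ := hconj r
        refine ⟨p * r', Or.inl ?_⟩
        rw [mul_assoc, ← mul_assoc a, hr, mul_assoc _ a, ha, mul_one, map_mul]
    | inv x _ hx =>
      have hai : a⁻¹ = a := by rw [inv_eq_iff_mul_eq_one, ha]
      obtain ⟨p, rfl | rfl⟩ := hx
      · exact ⟨p⁻¹, Or.inl (by rw [map_inv])⟩
      · obtain ⟨r, hr⟩ := hconj p⁻¹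
        refine ⟨r, Or.inr ?_⟩
        rw [_root_.mul_inv_rev, hai, ← map_inv, hr]
  let πK : K →* Mhat := π.comp K.subtype
  have hbij : Function.Bijective πK := by
    constructor
    · rw [injective_iff_map_eq_one]
      rintro ⟨x, hx⟩ h1
      have h1' : x.1 = 1 := h1
      obtain ⟨p, rfl | rfl⟩ := hKform x hx
      · have : p = 1 := hinj (by rw [map_one]; exact h1')
        apply Subtype.ext
        simp [this]
      · exfalso
        have h3 : δ ((J p * a).1) = 1 := by rw [h1', map_one]
        rw [Prod.fst_mul, map_mul, hδ, one_mul] at h3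
        simp only [a] at h3
        rw [ds] at h3
        exact absurd h3 (by decide)
    · rw [← MonoidHom.range_eq_top, eq_top_iff, ← gen_top, Subgroup.closure_le]
      rintro x (rfl | rfl | rfl)
      · exact ⟨⟨a, Subgroup.subset_closure (by simp)⟩, rfl⟩
      · exact ⟨⟨(phi, f'), Subgroup.subset_closure (by simp)⟩, rfl⟩
      · exact ⟨⟨(omega, w'), Subgroup.subset_closure (by simp)⟩, rfl⟩
  let E : K ≃* Mhat := MulEquiv.ofBijective πK hbij
  have hE : ∀ (x : Mhat × X) (hx : x ∈ K), E.symm x.1 = ⟨x, hx⟩ := by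
    intro x hx
    rw [MulEquiv.symm_apply_eq]; rfl
  refine ⟨((MonoidHom.snd Mhat X).comp K.subtype).comp E.symm.toMonoidHom, ?_, ?_, ?_⟩
  · have := hE a (Subgroup.subset_closure (by simp))
    simp only [a] at this
    simp [this]
  · have := hE (phi, f') (Subgroup.subset_closure (by simp))
    simp only at this
    simp [this]
  · have := hE (omega, w') (Subgroup.subset_closure (by simp))
    simp only at this
    simp [this]

lemma nu_tau : nu * tau = tau⁻¹ * nu := by
  rw [eq_inv_mul_iff_mul_eq, nu, tau, ← map_mul, ← map_mul, pr_eq_iff]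
  left; apply Units.ext; decide

lemma nu_nu : nu * nu = 1 := by
  rw [nu, ← map_mul, ← map_one pr, pr_eq_iff]; left; apply Units.ext; decide

lemma nu_tau_zpow (m : ℤ) : nu * tau ^ m = tau ^ (-m) * nu := by
  have h : SemiconjBy nu tau tau⁻¹ := nu_tau
  have := (h.zpow_right m).eq
  rw [this, _root_.zpow_neg, _root_.inv_zpow]

lemma tau_mem : tau ∈ That := Subgroup.subset_closure (by simp)
lemma nu_mem : nu ∈ That := Subgroup.subset_closure (by simp)

lemma That_form (g : Mhat) (hg : g ∈ That) : ∃ n : ℤ, g = tau ^ n ∨ g = tau ^ n * nu := by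
  induction hg using Subgroup.closure_induction with
  | mem x hx =>
    rcases hx with rfl | rfl
    · exact ⟨1, by simp⟩
    · exact ⟨0, by simp⟩
  | one => exact ⟨0, by simp⟩
  | mul x y _ _ hx hy =>
    obtain ⟨n, rfl | rfl⟩ := hx <;> obtain ⟨m, rfl | rfl⟩ := hy
    · exact ⟨n + m, Or.inl (_root_.zpow_add _ _ _).symm⟩
    · exact ⟨n + m, Or.inr (by rw [_root_.zpow_add, mul_assoc])⟩
    · exact ⟨n + -m, Or.inr (by rw [mul_assoc, nu_tau_zpow, _root_.zpow_add, mul_assoc])⟩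
    · exact ⟨n + -m, Or.inl (by
        rw [mul_assoc, ← mul_assoc nu, nu_tau_zpow, mul_assoc _ nu, nu_nu, mul_one, _root_.zpow_add])⟩
  | inv x _ hx =>
    obtain ⟨n, rfl | rfl⟩ := hx
    · exact ⟨-n, Or.inl (_root_.zpow_neg _ _).symm⟩
    · refine ⟨n, Or.inr ?_⟩
      have hn : nu⁻¹ = nu := by rw [inv_eq_iff_mul_eq_one, nu_nu]
      rw [_root_.mul_inv_rev, hn, ← _root_.zpow_neg, nu_tau_zpow, neg_neg]

lemma tauGL_pow (n : ℕ) : (tauGL ^ n).1 = !![1, (n : ℤ); 0, 1] := by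
  induction n with
  | zero => ext i j; fin_cases i <;> fin_cases j <;> simp
  | succ k ih =>
    rw [pow_succ, Units.val_mul, ih]
    ext i j; fin_cases i <;> fin_cases j <;>
      simp [tauGL, Matrix.mul_apply, Fin.sum_univ_two, add_comm]

lemma tau_pow_ne (n : ℕ) (h : tau ^ n = 1) : n = 0 := by
  rw [tau, ← map_pow, ← map_one pr, pr_eq_iff] at h
  rcases h with h | h
  · have := congrArg (fun A : GL2Z => A.1 0 1) h
    simp only [tauGL_pow] at this
    simpa using this
  · have := congrArg (fun A : GL2Z => A.1 0 1) h
    simp only [tauGL_pow] at this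
    simpa using this

lemma tau_zpow_ne (n : ℤ) (h : tau ^ n = 1) : n = 0 := by
  rcases Int.natAbs_eq n with e | e
  · rw [e, zpow_natCast] at h
    have := tau_pow_ne _ h
    omega
  · rw [e, _root_.zpow_neg, inv_eq_one, zpow_natCast] at h
    have := tau_pow_ne _ h
    omega

lemma That_upper (g : Mhat) (hg : g ∈ That) : ∃ A : GL2Z, pr A = g ∧ A.1 1 0 = 0 := by
  induction hg using Subgroup.closure_induction with
  | mem x hx =>
    rcases hx with rfl | rfl
    · exact ⟨tauGL, rfl, by simp [tauGL]⟩
    · exact ⟨nuGL, rfl, by simp [nuGL]⟩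
  | one => exact ⟨1, by simp, by simp⟩
  | mul x y _ _ hx hy =>
    obtain ⟨A, rfl, hA⟩ := hx
    obtain ⟨B, rfl, hB⟩ := hy
    exact ⟨A * B, map_mul _ _ _, by
      rw [Units.val_mul, Matrix.mul_apply, Fin.sum_univ_two, hA, hB]; simp⟩
  | inv x _ hx =>
    obtain ⟨A, rfl, hA⟩ := hx
    refine ⟨A⁻¹, map_inv _ _, ?_⟩
    have h : A.1 * (A⁻¹).1 = 1 := by rw [← Units.val_mul]; simp
    have h10 := congrFun (congrFun h 1) 0
    have h11 := congrFun (congrFun h 1) 1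
    rw [Matrix.mul_apply, Fin.sum_univ_two, hA] at h10 h11
    simp only [zero_mul, zero_add, Matrix.one_apply_eq] at h10 h11
    have h10' : A.1 1 1 * (A⁻¹).1 1 0 = 0 := by simpa using h10
    rcases mul_eq_zero.1 h10' with e | e
    · rw [e] at h11; simp at h11
    · exact e

lemma wtw_not_mem (c : ℕ) (h : omega * tau ^ c * omega ∈ That) : c = 0 := by
  obtain ⟨A, hA, h0⟩ := That_upper _ h
  rw [omega, tau, ← map_pow, ← map_mul, ← map_mul, pr_eq_iff] at hA
  have hc : (omegaGL * tauGL ^ c * omegaGL).1 1 0 = (c : ℤ) := by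
    rw [Units.val_mul, Units.val_mul, tauGL_pow]
    simp [omegaGL, Matrix.mul_apply, Fin.sum_univ_two]
  rcases hA with rfl | rfl
  · rw [hc] at h0; exact_mod_cast h0
  · rw [Units.val_neg, Matrix.neg_apply, hc] at h0
    omega

lemma nu_ne : nu ≠ 1 := by
  rw [nu, ← map_one pr, Ne, pr_eq_iff]
  rintro (h | h)
  · have := congrArg (fun A : GL2Z => A.1 0 0) h
    simp [nuGL] at this
  · have := congrArg (fun A : GL2Z => A.1 1 1) h
    simp [nuGL] at this

lemma omega_ne : omega ≠ 1 := by
  rw [omega, ← map_one pr, Ne, pr_eq_iff]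
  rintro (h | h)
  · have := congrArg (fun A : GL2Z => A.1 0 0) h
    simp [omegaGL] at this
  · have := congrArg (fun A : GL2Z => A.1 0 0) h
    simp [omegaGL] at this

lemma free_act {S : Subgroup Mhat} (h1 : IsNeumann S) {x : Mhat} (hx : x ∈ That) (q : Mhat ⧸ S)
    (h : x • q = q) : x = 1 := by
  obtain ⟨g, rfl⟩ := QuotientGroup.mk_surjective q
  have hg : g⁻¹ * (x * g) ∈ S := QuotientGroup.eq.1 h.symm
  have hu : g⁻¹ ∈ (S : Set Mhat) * (That : Set Mhat) := by rw [h1.1]; trivial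
  obtain ⟨a, ha, b, hb, hab⟩ := Set.mem_mul.1 hu
  have hg2 : g = b⁻¹ * a⁻¹ := by rw [← _root_.mul_inv_rev, hab, inv_inv]
  have e : a⁻¹ * (g⁻¹ * (x * g)) * a = b * x * b⁻¹ := by rw [hg2]; group
  have h3 : b * x * b⁻¹ ∈ S ⊓ That := by
    refine ⟨?_, That.mul_mem (That.mul_mem hb hx) (That.inv_mem hb)⟩
    rw [← e]; exact S.mul_mem (S.mul_mem (S.inv_mem ha) hg) ha
  rw [h1.2, Subgroup.mem_bot] at h3
  exact (conj_eq_one_iff).1 h3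

lemma nsetup {S : Subgroup Mhat} (h1 : IsNeumann S) :
    NSetup Mhat (Mhat ⧸ S) ((1 : Mhat) : Mhat ⧸ S) sig phi omega where
  hs := rel_ss
  hw := rel_ww
  hf := rel_fff
  hsf := rel_sf
  hsw := rel_sw
  w1 := omega_ne
  gen := gen_top
  trans := by
    intro q
    obtain ⟨g, rfl⟩ := QuotientGroup.mk_surjective q
    exact ⟨g, by rw [MulAction.Quotient.smul_coe]; simp⟩
  fs := by
    intro q hq
    let k : GL2Z := ⟨!![1,0;1,1], !![1,0;-1,1], by decide, by decide⟩
    have e : sig * pr k = pr k * (tau⁻¹ * nu) := by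
      rw [sig, tau, nu, ← map_inv, ← map_mul, ← map_mul, ← map_mul, pr_eq_iff]
      right; apply Units.ext; decide
    have e2 : tau⁻¹ * nu = (pr k)⁻¹ * sig * pr k := by
      rw [mul_assoc, e]; group
    have h3 : (tau⁻¹ * nu) • ((pr k)⁻¹ • q) = (pr k)⁻¹ • q := by
      rw [e2, smul_smul, mul_assoc _ (pr k), mul_inv_cancel, mul_one, mul_smul, hq]
    have h4 := free_act h1 (mul_mem (inv_mem tau_mem) nu_mem) _ h3
    rw [inv_mul_eq_one, tau, nu, pr_eq_iff] at h4
    rcases h4 with h | h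
    · have := congrArg (fun A : GL2Z => A.1 0 1) h
      simp [nuGL, tauGL] at this
    · have := congrArg (fun A : GL2Z => A.1 0 1) h
      simp [nuGL, tauGL] at this
  fws := by
    intro q hq
    apply nu_ne
    apply free_act h1 nu_mem q
    rw [nu_eq, mul_smul, ← hq, smul_smul, rel_ww, one_smul]

lemma int_bdd (B : Set ℤ) (hB : B.Finite) : ∃ M : ℕ, ∀ n ∈ B, -(M : ℤ) < n ∧ n < M := by
  obtain ⟨a, ha⟩ := hB.bddAbove
  obtain ⟨b, hb⟩ := hB.bddBelow
  refine ⟨a.natAbs + b.natAbs + 1, fun n hn => ?_⟩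
  have := ha hn
  have := hb hn
  constructor <;> rw [Nat.cast_add, Nat.cast_add, Nat.cast_one] <;> omega

lemma finite_range_of {X : Type} (g : ℤ → X) (h : {n | g (n + 1) ≠ g n}.Finite) :
    (Set.range g).Finite := by
  obtain ⟨M, hM⟩ := int_bdd _ h
  have hM' : ∀ n : ℤ, n ≤ -(M : ℤ) ∨ (M : ℤ) ≤ n → g (n + 1) = g n := by
    intro n hn
    by_contra hc
    have := hM n hc
    omega
  have hp : ∀ k : ℕ, g (M + k) = g M := by
    intro k
    induction k with
    | zero => simp
    | succ k ih =>
      rw [← ih, ← hM' (M + k) (by omega)]; push_cast; rw [add_assoc]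
  have hn : ∀ k : ℕ, g (-M - k) = g (-M) := by
    intro k
    induction k with
    | zero => simp
    | succ k ih =>
      rw [← ih, ← hM' (-M - (k + 1 : ℕ)) (by omega)]
      congr 1; push_cast; ring
  refine ((Set.finite_Icc (-(M : ℤ)) M).image g).subset ?_
  rintro _ ⟨n, rfl⟩
  rcases lt_trichotomy n (-(M : ℤ)) with h | h | h
  · refine ⟨-M, by simp, ?_⟩
    rw [← hn (-M - n).toNat]; congr 1; omega
  · exact ⟨n, by simp; omega, rfl⟩
  · by_cases h2 : n ≤ M
    · exact ⟨n, by simp; omega, rfl⟩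
    · refine ⟨M, by simp, ?_⟩
      rw [← hp (n - M).toNat]; congr 1; omega

lemma infinite_aux {S : Subgroup Mhat} (h1 : IsNeumann S) (t : Mhat ⧸ S → Mhat)
    (hfin : {q | t (phi • q) ≠ phi * t q ∨ t (omega • q) ≠ omega * t q}.Finite) : False := by
  set Bad : Set (Mhat ⧸ S) := {q | t (phi • q) ≠ phi * t q ∨ t (omega • q) ≠ omega * t q} with hBad
  let Bad' : Set (Mhat ⧸ S) := Bad ∪ (fun q => phi • q) ⁻¹' Bad
  have hfin' : Bad'.Finite := hfin.union (hfin.preimage (MulAction.injective phi).injOn)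
  have hgood : ∀ q, q ∉ Bad' → t (tau • q) = tau * t q := by
    intro q hq
    have ha : q ∉ Bad := fun h => hq (Or.inl h)
    have hb : phi • q ∉ Bad := fun h => hq (Or.inr h)
    simp only [hBad, Set.mem_ofPred_eq, not_or, not_not] at ha hb
    rw [tau_eq, mul_smul, hb.2, ha.1, mul_assoc]
  let q0 : Mhat ⧸ S := ((1 : Mhat) : Mhat ⧸ S)
  let F : Mhat ⧸ S → Mhat ⧸ That := fun q => (((t q)⁻¹ : Mhat) : Mhat ⧸ That)
  have hF : ∀ q, q ∉ Bad' → F (tau • q) = F q := by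
    intro q hq
    simp only [F]
    rw [hgood q hq, QuotientGroup.eq]
    have : (tau * t q)⁻¹⁻¹ * (t q)⁻¹ = tau := by group
    rw [this]; exact tau_mem
  have hinj : ∀ q : Mhat ⧸ S, Function.Injective (fun n : ℤ => tau ^ n • q) := by
    intro q n m hnm
    have hnm' : tau ^ n • q = tau ^ m • q := hnm
    have : tau ^ (-m + n) • q = q := by
      rw [_root_.zpow_add, mul_smul, hnm', smul_smul, ← _root_.zpow_add]; simp
    have := tau_zpow_ne _ (free_act h1 (zpow_mem tau_mem _) _ this)
    omega
  have hbadn : ∀ q : Mhat ⧸ S, {n : ℤ | tau ^ n • q ∈ Bad'}.Finite := fun q =>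
    hfin'.preimage (hinj q).injOn
  have hsucc : ∀ (q : Mhat ⧸ S) (n : ℤ), tau ^ (n + 1) • q = tau • (tau ^ n • q) := by
    intro q n
    rw [smul_smul, add_comm, _root_.zpow_add, zpow_one]
  have hrg : ∀ q : Mhat ⧸ S, (Set.range (fun n : ℤ => F (tau ^ n • q))).Finite := by
    intro q
    apply finite_range_of
    refine (hbadn q).subset ?_
    intro n hn
    by_contra hc
    apply hn
    change F _ = F _
    rw [hsucc]
    exact hF _ hc
  have hFr : (Set.range F).Finite := by
    refine ((hrg q0).union (hrg (nu • q0))).subset ?_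
    rintro _ ⟨q, rfl⟩
    obtain ⟨g, rfl⟩ := QuotientGroup.mk_surjective q
    have hu : g⁻¹ ∈ (S : Set Mhat) * (That : Set Mhat) := by rw [h1.1]; trivial
    obtain ⟨a, ha, b, hb, hab⟩ := Set.mem_mul.1 hu
    have hg2 : g = b⁻¹ * a⁻¹ := by rw [← _root_.mul_inv_rev, hab, inv_inv]
    have hq : ((g : Mhat) : Mhat ⧸ S) = b⁻¹ • q0 := by
      simp only [q0]
      rw [MulAction.Quotient.smul_coe, QuotientGroup.eq, hg2]
      have : (b⁻¹ * a⁻¹)⁻¹ * b⁻¹ • (1 : Mhat) = a := by rw [smul_eq_mul]; group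
      rw [this]; exact ha
    rw [hq]
    obtain ⟨n, e | e⟩ := That_form _ (inv_mem hb)
    · left; exact ⟨n, by rw [e]⟩
    · right; exact ⟨n, by rw [e, mul_smul]⟩
  obtain ⟨M, hM⟩ := int_bdd _ (hbadn q0)
  have hgoodn : ∀ k : ℕ, tau ^ ((M : ℤ) + k) • q0 ∉ Bad' := by
    intro k hk
    have := hM _ hk
    omega
  let m := t (tau ^ (M : ℤ) • q0)
  have ht : ∀ k : ℕ, t (tau ^ ((M : ℤ) + k) • q0) = tau ^ k * m := by
    intro k
    induction k with
    | zero => simp [m]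
    | succ k ih =>
      have e : (M : ℤ) + (k + 1 : ℕ) = (M + k) + 1 := by push_cast; ring
      rw [e, hsucc, hgood _ (hgoodn k), ih, pow_succ', mul_assoc]
  have htw : ∀ k : ℕ, t (omega • tau ^ ((M : ℤ) + k) • q0) = omega * (tau ^ k * m) := by
    intro k
    have ha : tau ^ ((M : ℤ) + k) • q0 ∉ Bad := fun h => hgoodn k (Or.inl h)
    simp only [hBad, Set.mem_ofPred_eq, not_or, not_not] at ha
    rw [ha.2, ht]
  have hfr : Finite (Set.range F) := hFr
  obtain ⟨k, k', hne, hkk⟩ := Finite.exists_ne_map_eq_of_infinite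
    (fun k : ℕ => (⟨F (omega • tau ^ ((M : ℤ) + k) • q0), Set.mem_range_self _⟩ : Set.range F))
  have hkk' : F (omega • tau ^ ((M : ℤ) + k) • q0) = F (omega • tau ^ ((M : ℤ) + k') • q0) :=
    congrArg Subtype.val hkk
  have key : ∀ k k' : ℕ, k < k' →
      F (omega • tau ^ ((M : ℤ) + k) • q0) = F (omega • tau ^ ((M : ℤ) + k') • q0) → False := by
    intro k k' hlt h
    simp only [F] at h
    rw [htw, htw] at h
    have h2 := QuotientGroup.eq.1 h.symm
    obtain ⟨c, rfl⟩ := Nat.exists_eq_add_of_lt hlt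
    have hwi : omega⁻¹ = omega := by rw [inv_eq_iff_mul_eq_one, rel_ww]
    have e : (omega * (tau ^ (k + c + 1) * m))⁻¹⁻¹ * (omega * (tau ^ k * m))⁻¹
        = omega * tau ^ (c + 1) * omega := by
      have : k + c + 1 = (c + 1) + k := by ring
      rw [this, pow_add]
      conv_rhs => rw [← hwi]
      rw [hwi]
      conv_lhs => rw [inv_inv, _root_.mul_inv_rev, _root_.mul_inv_rev, hwi]
      group
    rw [e] at h2
    have := wtw_not_mem _ h2
    omega
  rcases lt_or_gt_of_ne hne with h | h
  · exact key _ _ h hkk'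
  · exact key _ _ h hkk'.symm
/-- If Ŝ is a Neumann subgroup of M̂ = PGL(2,ℤ) not contained
in M = PSL(2,ℤ), then Ŝ is isomorphic to a free product of infinitely many
groups, each cyclic of order 2, cyclic of order 3, or infinite cyclic. -/
theorem neumann_free_product_structure
    (Shat : Subgroup Mhat) (h1 : IsNeumann Shat) (h2 : ¬ Shat ≤ Msub) :
    ∃ (ι : Type) (H : ι → Type) (inst : ∀ i, Group (H i)),
      letI := inst
      Infinite ι ∧
      (∀ i, Nonempty (H i ≃* Multiplicative (ZMod 2)) ∨
        Nonempty (H i ≃* Multiplicative (ZMod 3)) ∨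
        Nonempty (H i ≃* Multiplicative ℤ)) ∧
      Nonempty (↥Shat ≃* Monoid.CoprodI H) := by
  obtain ⟨ι, m, hm, ⟨e⟩, t, -, hfin⟩ := (nsetup h1).main
    (fun X _ s' f' w' a b c d e => Mhat_lift X s' f' w' a b c d e)
  refine ⟨ι, fun i => Multiplicative (ZMod (m i)), fun i => inferInstance, ?_, ?_, ?_⟩
  · by_contra hc
    exact infinite_aux h1 t (hfin (not_infinite_iff_finite.1 hc))
  · intro i
    rcases hm i with h | h | h
    · left; change Nonempty (Multiplicative (ZMod (m i)) ≃* _); rw [h]; exact ⟨MulEquiv.refl _⟩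
    · right; left; change Nonempty (Multiplicative (ZMod (m i)) ≃* _); rw [h]
      exact ⟨MulEquiv.refl _⟩
    · right; right; change Nonempty (Multiplicative (ZMod (m i)) ≃* _); rw [h]
      exact ⟨MulEquiv.refl _⟩
  · have hst : Shat = MulAction.stabilizer Mhat (((1 : Mhat)) : Mhat ⧸ Shat) :=
      (MulAction.stabilizer_quotient Shat).symm
    exact ⟨(MulEquiv.subgroupCongr hst).trans e⟩
end
end
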